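/- arXiv:2605.03347 — 2 statements merged into one kernel-verified Lean document; each statement's English description precedes it below -/
import Mathlib

section
/- Let G be a finite simple graph on vertex set {1,…,n} with at least one edge, K a field, R = K[x_1,…,x_n], and J(G) its cover ideal. Then the sequence of symbolic-power depths is non-increasing: depth(R/J(G)^{(s)}) ≥ depth(R/J(G)^{(s+1)}) for all s ≥ 1. -/
/-!
The depth of `R/I` is read off Koszul cohomology: for `I` contained in the maximal homogeneous
ideal and any `k ≥ 1`, there is a regular sequence of length `d` in `(x_1,…,x_n)` on `R/I` if and
only if `Hⁱ(x_1ᵏ,…,x_nᵏ; R/I) = 0` for all `i < d` (`exists_isRegular_iff`). This is the usual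
induction along `0 → M → M → M/rM → 0`: each `x_jᵏ` annihilates the cohomology, and prime avoidance
supplies a nonzerodivisor in `(x_1ᵏ,…,x_nᵏ)` once `H⁰` vanishes.

The Koszul complexes of the monomial quotients `R/J(G)^{(s)}` and `R/J(G)^{(s+1)}` are then
compared by exponents. A monomial `xᵉ` lies outside `J(G)^{(s)}` exactly when `e_u + e_v < s` for
some edge `uv`. The injection `phi` of `ℕ` that raises by one every exponent `e` with `2 * e ≥ s`
satisfies `a + b < s ↔ phi a + phi b < s + 1`: if `a + b ≥ s` at least one of `a`, `b` is raised,
and if `a + b < s` at most one is. Applied coordinatewise, and extended by `psi` to the coordinates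
in `F` in the component of the Koszul complex indexed by `F`, it maps monomials to monomials,
preserves membership in the ideals, and turns multiplication by `x_jᵏ` into multiplication by
`x_jᵏ⁺¹`. With `k ≥ s` this gives a `K`-linear chain map from the Koszul complex of `(x_jᵏ)` on
`R/J(G)^{(s)}` to that of `(x_jᵏ⁺¹)` on `R/J(G)^{(s+1)}`, with a chain map as left inverse. Hence
vanishing for `s + 1` implies vanishing for `s` (`kvan_transfer`), and the depth inequality follows.
-/

open MvPolynomial

/-- The cover ideal `J(G) = ⋂_{{u,v} ∈ E(G)} (x_u, x_v)` of a graph `G` on `{1,…,n}`,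
inside `R = K[x_1,…,x_n]`. -/
noncomputable def coverIdeal (K : Type*) [Field K] {n : ℕ} (G : SimpleGraph (Fin n)) :
    Ideal (MvPolynomial (Fin n) K) :=
  ⨅ (u : Fin n) (v : Fin n) (_ : G.Adj u v), Ideal.span {X u, X v}

/-- The `s`-th symbolic power of the cover ideal:
`J(G)^{(s)} = ⋂_{{u,v} ∈ E(G)} (x_u, x_v)^s`. -/
noncomputable def coverIdealSymbPow (K : Type*) [Field K] {n : ℕ} (G : SimpleGraph (Fin n))
    (s : ℕ) : Ideal (MvPolynomial (Fin n) K) :=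
  ⨅ (u : Fin n) (v : Fin n) (_ : G.Adj u v), (Ideal.span {X u, X v}) ^ s

/-- The maximal homogeneous ideal `(x_1,…,x_n)` of `K[x_1,…,x_n]`. -/
noncomputable def maxIdeal (K : Type*) [Field K] (n : ℕ) : Ideal (MvPolynomial (Fin n) K) :=
  Ideal.span (Set.range (X : Fin n → MvPolynomial (Fin n) K))

/-- `depth(R/I)` with respect to the maximal homogeneous ideal: the supremum of the
lengths of `R/I`-regular sequences consisting of elements of `(x_1,…,x_n)`. -/
noncomputable def depthQuot (K : Type*) [Field K] (n : ℕ)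
    (I : Ideal (MvPolynomial (Fin n) K)) : ℕ :=
  sSup {d : ℕ | ∃ rs : List (MvPolynomial (Fin n) K), rs.length = d ∧
    (∀ r ∈ rs, r ∈ maxIdeal K n) ∧
    RingTheory.Sequence.IsRegular ((MvPolynomial (Fin n) K) ⧸ I) rs}

namespace SymbDepth

/-! ### The Koszul cochain complex -/

section Koszul

open scoped Pointwise

variable {ι : Type*} {R : Type*} [CommRing R]
  {M : Type*} [AddCommGroup M] [Module R M] {N : Type*} [AddCommGroup N] [Module R N]

lemma smul_cochain_injective {r : R} (hr : IsSMulRegular M r) {u v : Finset ι → M}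
    (h : r • u = r • v) : u = v :=
  funext fun F => hr (congrFun h F)

/-- The cochain `f` is homogeneous of cohomological degree `i`. -/
def Homog (i : ℕ) (f : Finset ι → M) : Prop := ∀ F, F.card ≠ i → f F = 0

lemma exists_lift_homog {r : R} {i : ℕ} {z : Finset ι → QuotSMulTop r M} (hz : Homog i z) :
    ∃ z' : Finset ι → M, Homog i z' ∧
      (fun F => Submodule.mkQ (r • (⊤ : Submodule R M)) (z' F)) = z := by
  classical
  choose g hg using fun m : QuotSMulTop r M => Submodule.mkQ_surjective _ m
  refine ⟨fun F => if F.card = i then g (z F) else 0, fun F hF => by simp [hF], ?_⟩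
  ext F
  by_cases hF : F.card = i
  · simp only [hF, if_true]; exact hg _
  · simp only [hF, if_false, map_zero]; exact (hz F hF).symm

lemma exists_smul_of_mkQ_eq_zero {r : R} (hr : IsSMulRegular M r) {i : ℕ} {z : Finset ι → M}
    (hz : Homog i z) (h : ∀ F, Submodule.mkQ (r • (⊤ : Submodule R M)) (z F) = 0) :
    ∃ w : Finset ι → M, Homog i w ∧ z = r • w := by
  have h' : ∀ F, ∃ m : M, r • m = z F := fun F => by
    have := h F
    rw [Submodule.mkQ_apply, Submodule.Quotient.mk_eq_zero,
      Submodule.mem_smul_pointwise_iff_exists] at this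
    obtain ⟨m, -, hm⟩ := this
    exact ⟨m, hm⟩
  choose w hw using h'
  refine ⟨w, fun F hF => hr ?_, funext fun F => (hw F).symm⟩
  simp only [hw, hz F hF, smul_zero]

variable [LinearOrder ι]

/-- The sign `(-1)^{#{i ∈ F : i < j}}` of moving `e_j` into its place in `e_F`. -/
def sgn (j : ι) (F : Finset ι) : ℤ := (-1) ^ (F.filter (· < j)).card

lemma sgn_mul_self (j : ι) (F : Finset ι) : sgn j F * sgn j F = 1 := by
  rw [sgn, ← mul_pow]; simp

lemma sgn_erase_of_lt {i j : ι} {F : Finset ι} (h : i < j) (hi : i ∈ F) :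
    sgn j (F.erase i) = - sgn j F := by
  have hm : i ∈ F.filter (· < j) := by simp [hi, h]
  have hc : ((F.erase i).filter (· < j)).card + 1 = (F.filter (· < j)).card := by
    have he : (F.erase i).filter (· < j) = (F.filter (· < j)).erase i := by
      ext a; simp only [Finset.mem_filter, Finset.mem_erase]; tauto
    rw [he]
    exact Finset.card_erase_add_one hm
  rw [sgn, sgn, ← hc, pow_succ]; ring

lemma sgn_erase_of_le {i j : ι} {F : Finset ι} (h : j ≤ i) :
    sgn j (F.erase i) = sgn j F := by
  have : (F.erase i).filter (· < j) = F.filter (· < j) := by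
    ext a; simp only [Finset.mem_filter, Finset.mem_erase]
    constructor
    · tauto
    · rintro ⟨h1, h2⟩; exact ⟨⟨(h2.trans_le h).ne, h1⟩, h2⟩
  rw [sgn, sgn, this]

lemma sgn_insert_of_lt {i j : ι} {F : Finset ι} (h : i < j) (hi : i ∉ F) :
    sgn j (insert i F) = - sgn j F := by
  have := sgn_erase_of_lt h (Finset.mem_insert_self i F)
  rw [Finset.erase_insert hi] at this
  rw [this, neg_neg]

lemma sgn_insert_of_le {i j : ι} {F : Finset ι} (h : j ≤ i) :
    sgn j (insert i F) = sgn j F := by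
  rw [← sgn_erase_of_le (F := insert i F) h, Finset.erase_insert_eq_erase, sgn_erase_of_le h]

variable (R) in
/-- Exterior multiplication by `e_j` on `⋀ Rⁿ ⊗ M`, an element `∑ e_F ⊗ f(F)` of which is encoded
as the function `f : Finset ι → M`. -/
def wedge (j : ι) : (Finset ι → M) →ₗ[R] (Finset ι → M) where
  toFun f F := if j ∈ F then sgn j F • f (F.erase j) else 0
  map_add' f g := by
    ext F; by_cases h : j ∈ F <;> simp [h]
  map_smul' c f := by
    ext F; by_cases h : j ∈ F <;> simp [h, smul_comm c]

variable (R) in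
/-- Contraction with the dual basis vector of `e_j` on `⋀ Rⁿ ⊗ M`. -/
def contr (j : ι) : (Finset ι → M) →ₗ[R] (Finset ι → M) where
  toFun f F := if j ∈ F then 0 else sgn j F • f (insert j F)
  map_add' f g := by
    ext F; by_cases h : j ∈ F <;> simp [h]
  map_smul' c f := by
    ext F; by_cases h : j ∈ F <;> simp [h, smul_comm c]

lemma wedge_apply (j : ι) (f : Finset ι → M) (F : Finset ι) :
    wedge R j f F = if j ∈ F then sgn j F • f (F.erase j) else 0 := rfl

lemma contr_apply (j : ι) (f : Finset ι → M) (F : Finset ι) :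
    contr R j f F = if j ∈ F then 0 else sgn j F • f (insert j F) := rfl

lemma wedge_self (j : ι) (f : Finset ι → M) : wedge R j (wedge R j f) = 0 := by
  ext F; simp [wedge_apply]

lemma wedge_anticomm_of_lt {i j : ι} (hij : i < j) (f : Finset ι → M) :
    wedge R i (wedge R j f) = - wedge R j (wedge R i f) := by
  ext F
  simp only [wedge_apply, Pi.neg_apply, Finset.mem_erase]
  by_cases hi : i ∈ F <;> by_cases hj : j ∈ F <;> simp [hi, hj, hij.ne, hij.ne']
  rw [sgn_erase_of_lt hij hi, sgn_erase_of_le hij.le, Finset.erase_right_comm, smul_smul,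
    smul_smul, ← neg_smul]
  congr 1; ring

lemma wedge_anticomm (i j : ι) (f : Finset ι → M) :
    wedge R i (wedge R j f) = - wedge R j (wedge R i f) := by
  rcases lt_trichotomy i j with h | h | h
  · exact wedge_anticomm_of_lt h f
  · subst h; simp [wedge_self]
  · rw [wedge_anticomm_of_lt h f, neg_neg]

lemma wedge_contr_self (j : ι) (f : Finset ι → M) :
    wedge R j (contr R j f) + contr R j (wedge R j f) = f := by
  ext F
  by_cases hj : j ∈ F
  · simp [wedge_apply, contr_apply, hj, sgn_erase_of_le le_rfl, smul_smul, sgn_mul_self]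
  · simp [wedge_apply, contr_apply, hj, sgn_insert_of_le le_rfl, smul_smul, sgn_mul_self]

lemma wedge_contr {i j : ι} (hij : i ≠ j) (f : Finset ι → M) :
    wedge R i (contr R j f) + contr R j (wedge R i f) = 0 := by
  ext F
  simp only [wedge_apply, contr_apply, Pi.add_apply, Finset.mem_erase, Finset.mem_insert]
  by_cases hi : i ∈ F <;> by_cases hj : j ∈ F <;> simp [hi, hj, hij, hij.symm]
  rw [Finset.erase_insert_of_ne hij.symm, smul_smul, smul_smul, ← add_smul]
  rcases lt_or_gt_of_ne hij with h | h
  · rw [sgn_erase_of_lt h hi, sgn_insert_of_le h.le,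
      show sgn i F * -sgn j F + sgn j F * sgn i F = 0 by ring, zero_smul]
  · rw [sgn_erase_of_le h.le, sgn_insert_of_lt h hj,
      show sgn i F * sgn j F + sgn j F * -sgn i F = 0 by ring, zero_smul]

lemma Homog.contr {i : ℕ} {f : Finset ι → M} (hf : Homog (i + 1) f) (j : ι) :
    Homog i (SymbDepth.contr R j f) := by
  intro F hF
  rw [contr_apply]
  split_ifs with hj
  · rfl
  · rw [hf, smul_zero]
    rw [Finset.card_insert_of_notMem hj]; omega

lemma contr_homog_zero {f : Finset ι → M} (hf : Homog 0 f) (j : ι) : contr R j f = 0 := by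
  ext F
  rw [contr_apply]
  split_ifs with hj
  · rfl
  · rw [hf _ (by rw [Finset.card_insert_of_notMem hj]; omega), smul_zero]; rfl

variable [Fintype ι]

/-- The Koszul differential: exterior multiplication by `∑ y_j e_j` on `⋀ Rⁿ ⊗ M`. -/
def kd (y : ι → R) : (Finset ι → M) →ₗ[R] (Finset ι → M) := ∑ j, y j • wedge R j

lemma kd_eq (y : ι → R) (f : Finset ι → M) : kd y f = ∑ j, y j • wedge R j f := by
  simp [kd]

lemma kd_apply (y : ι → R) (f : Finset ι → M) (F : Finset ι) :
    kd y f F = ∑ j, y j • wedge R j f F := by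
  simp [kd_eq]

lemma kd_kd (y : ι → R) (f : Finset ι → M) : kd y (kd y f) = 0 := by
  have h : kd y (kd y f) = ∑ p : ι × ι, (y p.1 * y p.2) • wedge R p.1 (wedge R p.2 f) := by
    rw [Fintype.sum_prod_type, kd_eq]
    refine Finset.sum_congr rfl fun i _ => ?_
    rw [kd_eq, map_sum, Finset.smul_sum]
    refine Finset.sum_congr rfl fun j _ => ?_
    rw [map_smul, smul_smul]
  rw [h]
  refine Finset.sum_involution (fun p _ => p.swap) ?_ ?_ (by simp) (by simp)
  · rintro ⟨i, j⟩ _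
    simp only [Prod.swap]
    rw [wedge_anticomm i j, mul_comm (y j), smul_neg, neg_add_cancel]
  · rintro ⟨i, j⟩ _ hne heq
    simp only [Prod.swap, Prod.mk.injEq] at heq
    obtain ⟨rfl, -⟩ := heq
    simp [wedge_self] at hne

/-- Contraction with `e_j` is a homotopy from multiplication by `y_j` to zero. -/
lemma kd_contr (y : ι → R) (j : ι) (f : Finset ι → M) :
    kd y (contr R j f) + contr R j (kd y f) = y j • f := by
  rw [kd_eq, kd_eq, map_sum, ← Finset.sum_add_distrib, Finset.sum_eq_single j]
  · rw [map_smul, ← smul_add, wedge_contr_self]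
  · intro i _ hij
    rw [map_smul, ← smul_add, wedge_contr hij, smul_zero]
  · simp

lemma kd_map (y : ι → R) (φ : M →ₗ[R] N) (f : Finset ι → M) :
    kd y (fun F => φ (f F)) = fun F => φ (kd y f F) := by
  ext F
  simp only [kd_apply, map_sum, map_smul]
  refine Finset.sum_congr rfl fun j _ => ?_
  simp only [wedge_apply]
  split_ifs <;> simp

lemma Homog.kd {i : ℕ} {f : Finset ι → M} (hf : Homog i f) (y : ι → R) :
    Homog (i + 1) (SymbDepth.kd y f) := by
  intro F hF
  rw [kd_apply]
  refine Finset.sum_eq_zero fun j _ => ?_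
  rw [wedge_apply]
  split_ifs with hj
  · rw [hf, smul_zero, smul_zero]
    have := Finset.card_erase_add_one hj
    omega
  · simp

variable (M) in
/-- The cochain `z` of degree `i` is a coboundary (in degree zero: vanishes). -/
def IsCob (y : ι → R) (i : ℕ) (z : Finset ι → M) : Prop :=
  ∃ w : Finset ι → M, (∀ F, F.card + 1 ≠ i → w F = 0) ∧ kd y w = z

variable (M) in
/-- Vanishing of the `i`-th Koszul cohomology `Hⁱ(y; M)`. -/
def KVan (y : ι → R) (i : ℕ) : Prop :=
  ∀ z : Finset ι → M, Homog i z → kd y z = 0 → IsCob M y i z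

lemma isCob_zero_iff {y : ι → R} {z : Finset ι → M} : IsCob M y 0 z ↔ z = 0 := by
  constructor
  · rintro ⟨w, hw, rfl⟩
    rw [show w = 0 from funext fun F => hw F (by omega), map_zero]
  · rintro rfl
    exact ⟨0, fun _ _ => rfl, map_zero _⟩

lemma isCob_succ_iff {y : ι → R} {i : ℕ} {z : Finset ι → M} :
    IsCob M y (i + 1) z ↔ ∃ w : Finset ι → M, Homog i w ∧ kd y w = z := by
  simp [IsCob, Homog]

/-- The ideal generated by `y` annihilates the Koszul cohomology. -/
lemma isCob_smul {y : ι → R} {i : ℕ} {z : Finset ι → M} (hz : Homog i z) (hd : kd y z = 0)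
    {c : R} (hc : c ∈ Ideal.span (Set.range y)) : IsCob M y i (c • z) := by
  induction hc using Submodule.span_induction with
  | mem x hx =>
    obtain ⟨j, rfl⟩ := hx
    have h := kd_contr y j z
    rw [hd, map_zero, add_zero] at h
    cases i with
    | zero => rw [isCob_zero_iff, ← h, contr_homog_zero hz, map_zero]
    | succ i => exact isCob_succ_iff.2 ⟨_, hz.contr j, h⟩
  | zero => exact ⟨0, fun _ _ => rfl, by simp⟩
  | add a b _ _ ha hb =>
    obtain ⟨u, hu, hu'⟩ := ha
    obtain ⟨v, hv, hv'⟩ := hb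
    exact ⟨u + v, fun F hF => by simp [hu F hF, hv F hF], by rw [map_add, hu', hv', add_smul]⟩
  | smul a b _ hb =>
    obtain ⟨u, hu, hu'⟩ := hb
    exact ⟨a • u, fun F hF => by simp [hu F hF], by rw [map_smul, hu', smul_smul, smul_eq_mul]⟩

/-! ### Depth sensitivity of Koszul cohomology -/

/-- From the long exact sequence of `0 → M → M → M/rM → 0`. -/
lemma kvan_quot {y : ι → R} {r : R} (hr : IsSMulRegular M r) {i : ℕ}
    (h0 : KVan M y i) (h1 : KVan M y (i + 1)) : KVan (QuotSMulTop r M) y i := by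
  intro zb hzb hd
  obtain ⟨z, hz, rfl⟩ := exists_lift_homog hzb
  rw [kd_map] at hd
  obtain ⟨w, hw, hzw⟩ := exists_smul_of_mkQ_eq_zero hr (hz.kd y) (congrFun hd)
  have hdw : kd y w = 0 := smul_cochain_injective hr (by
    rw [← map_smul, ← hzw, kd_kd, smul_zero])
  obtain ⟨u, hu, rfl⟩ := isCob_succ_iff.1 (h1 w hw hdw)
  obtain ⟨v, hv, hv'⟩ := h0 (z - r • u) (fun F hF => by simp [hz F hF, hu F hF])
    (by rw [map_sub, map_smul, hzw, sub_self])
  refine ⟨fun F => Submodule.mkQ _ (v F), fun F hF => by simp [hv F hF], ?_⟩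
  rw [kd_map, hv']
  ext F
  simp only [Pi.sub_apply, Pi.smul_apply, map_sub, sub_eq_self]
  rw [Submodule.mkQ_apply, Submodule.Quotient.mk_eq_zero]
  exact Submodule.smul_mem_pointwise_smul _ _ _ trivial

lemma kvan_of_quot {y : ι → R} {r : R} (hr : IsSMulRegular M r)
    (hrad : r ∈ (Ideal.span (Set.range y)).radical) {i : ℕ}
    (h : ∀ j, j + 1 = i → KVan (QuotSMulTop r M) y j) : KVan M y i := by
  intro z hz hd
  obtain ⟨N, hN⟩ := hrad
  have key : ∀ N : ℕ, IsCob M y i (r ^ N • z) → IsCob M y i z := by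
    intro N
    induction N with
    | zero => intro h; simpa using h
    | succ N ih =>
      intro hc
      apply ih
      cases i with
      | zero =>
        rw [isCob_zero_iff] at hc ⊢
        apply smul_cochain_injective hr
        rw [smul_smul, ← pow_succ', hc, smul_zero]
      | succ i =>
        obtain ⟨w, hw, hwz⟩ := isCob_succ_iff.1 hc
        have hwb : kd y (fun F => Submodule.mkQ (r • (⊤ : Submodule R M)) (w F)) = 0 := by
          rw [kd_map, hwz]
          ext F
          rw [Submodule.mkQ_apply, Pi.zero_apply, Submodule.Quotient.mk_eq_zero, pow_succ',
            ← smul_smul]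
          exact Submodule.smul_mem_pointwise_smul _ _ _ trivial
        obtain ⟨vb, hvb, hvb'⟩ := h i rfl _ (fun F hF => by simp [hw F hF]) hwb
        obtain ⟨v, hv, hv'⟩ : ∃ v : Finset ι → M, (∀ F, F.card + 1 ≠ i → v F = 0) ∧
            (fun F => Submodule.mkQ (r • (⊤ : Submodule R M)) (v F)) = vb := by
          cases i with
          | zero =>
            exact ⟨0, fun _ _ => rfl, funext fun F => by
              rw [hvb F (by omega)]; exact map_zero _⟩
          | succ i =>
            obtain ⟨v, hv, hv'⟩ := exists_lift_homog (i := i) (z := vb)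
              (fun F hF => hvb F (by omega))
            exact ⟨v, fun F hF => hv F (by omega), hv'⟩
        have hkv : Homog i (kd y v) := by
          cases i with
          | zero =>
            rw [show v = 0 from funext fun F => hv F (by omega), map_zero]
            exact fun _ _ => rfl
          | succ i =>
            have hv1 : Homog i v := fun F hF => hv F (by omega)
            exact hv1.kd y
        obtain ⟨u, hu, hu'⟩ := exists_smul_of_mkQ_eq_zero (z := w - kd y v) hr
          (fun F hF => by simp [hw F hF, hkv F hF]) (fun F => by
            rw [← hv', kd_map] at hvb'
            have := congrFun hvb' F
            rw [Pi.sub_apply, map_sub, sub_eq_zero]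
            exact this.symm)
        refine isCob_succ_iff.2 ⟨u, hu, smul_cochain_injective hr ?_⟩
        rw [← map_smul, ← hu', map_sub, kd_kd, sub_zero, hwz, smul_smul, pow_succ']
  exact key N (isCob_smul hz hd hN)

/-- A weakly regular sequence of length `d` in the radical of `(y)` forces `Hⁱ(y; M) = 0` for
`i < d`. -/
lemma kvan_of_isWeaklyRegular {y : ι → R} {rs : List R}
    (hrs : ∀ r ∈ rs, r ∈ (Ideal.span (Set.range y)).radical) :
    ∀ {M : Type*} [AddCommGroup M] [Module R M],
      RingTheory.Sequence.IsWeaklyRegular M rs → ∀ i < rs.length, KVan M y i := by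
  induction rs with
  | nil => intro M _ _ _ i hi; simp at hi
  | cons r rs ih =>
    intro M _ _ h i hi
    rw [RingTheory.Sequence.isWeaklyRegular_cons_iff] at h
    refine kvan_of_quot h.1 (hrs r (by simp)) fun j hj => ?_
    refine ih (fun r hr => hrs r (by simp [hr])) h.2 j ?_
    simp at hi; omega

/-- If `H⁰(y; M) = 0` then `(y)` contains an `M`-regular element, by prime avoidance. -/
lemma exists_isSMulRegular [IsNoetherianRing R] [Module.Finite R M] {y : ι → R}
    (h : KVan M y 0) : ∃ r ∈ Ideal.span (Set.range y), IsSMulRegular M r := by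
  by_contra! hcon
  have hsub : (Ideal.span (Set.range y) : Set R) ⊆
      ⋃ p ∈ ((associatedPrimes.finite R M).toFinset : Set (Ideal R)), (p : Set R) := by
    intro r hr
    have h1 := hcon r hr
    have : r ∈ ⋃ p ∈ associatedPrimes R M, (p : Set R) := by
      rw [biUnion_associatedPrimes_eq_zero_divisors]
      by_contra hne
      refine h1 (isSMulRegular_iff_right_eq_zero_of_smul.2 fun x hx => ?_)
      by_contra hx0
      exact hne ⟨x, hx0, hx⟩
    simpa using this
  obtain ⟨p, hp, hle⟩ := (Ideal.subset_union_prime (f := id) ⊥ ⊥ (by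
    intro p hp _ _
    rw [Set.Finite.mem_toFinset] at hp
    exact hp.isPrime)).1 hsub
  rw [Set.Finite.mem_toFinset, AssociatedPrimes.mem_iff, isAssociatedPrime_iff] at hp
  obtain ⟨hpp, x, hx⟩ := hp
  have hyx : ∀ j, y j • x = 0 := fun j => by
    have : y j ∈ p := hle (Ideal.subset_span ⟨j, rfl⟩)
    rw [hx] at this
    simpa [Submodule.mem_colon_singleton] using this
  have hz := isCob_zero_iff.1 (h (Pi.single ∅ x)
    (fun F hF => by
      rw [Pi.single_eq_of_ne]; rintro rfl; simp at hF) (by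
      ext F
      rw [kd_apply]
      refine Finset.sum_eq_zero fun j _ => ?_
      rw [wedge_apply]
      split_ifs
      · by_cases hF : F.erase j = ∅
        · rw [hF, Pi.single_eq_same, smul_comm, hyx, smul_zero]
        · rw [Pi.single_eq_of_ne hF, smul_zero, smul_zero]
      · exact smul_zero _))
  have hx0 : x = 0 := by simpa using congrFun hz ∅
  apply hpp.ne_top
  rw [hx, hx0]
  ext; simp

/-- Conversely, vanishing of `Hⁱ(y; M)` for `i < d` produces a weakly regular sequence of length
`d` in `(y)`. -/
lemma exists_isWeaklyRegular [IsNoetherianRing R] {y : ι → R} (d : ℕ) :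
    ∀ {M : Type*} [AddCommGroup M] [Module R M] [Module.Finite R M],
      (∀ i < d, KVan M y i) → ∃ rs : List R, rs.length = d ∧
        (∀ r ∈ rs, r ∈ Ideal.span (Set.range y)) ∧ RingTheory.Sequence.IsWeaklyRegular M rs := by
  induction d with
  | zero => intro M _ _ _ _; exact ⟨[], rfl, by simp, by simp⟩
  | succ d ih =>
    intro M _ _ _ h
    obtain ⟨r, hr, hreg⟩ := exists_isSMulRegular (h 0 (by omega))
    obtain ⟨rs, hl, hm, hw⟩ := ih (M := QuotSMulTop r M)
      fun i hi => kvan_quot hreg (h i (by omega)) (h (i + 1) (by omega))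
    refine ⟨r :: rs, by simp [hl], ?_, ?_⟩
    · simpa using ⟨hr, hm⟩
    · rw [RingTheory.Sequence.isWeaklyRegular_cons_iff]
      exact ⟨hreg, hw⟩

/-- The top Koszul cohomology is `M/(y)M`. -/
lemma smul_top_of_kvan_card {y : ι → R} (h : KVan M y (Fintype.card ι)) :
    Ideal.span (Set.range y) • (⊤ : Submodule R M) = ⊤ := by
  rw [eq_top_iff]
  intro m _
  obtain ⟨w, -, hw⟩ := h (Pi.single Finset.univ m)
    (fun F hF => by
      rw [Pi.single_eq_of_ne]; rintro rfl; simp at hF) (by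
      ext F
      rw [kd_apply]
      refine Finset.sum_eq_zero fun j _ => ?_
      rw [wedge_apply]
      split_ifs
      · rw [Pi.single_eq_of_ne, smul_zero, smul_zero]
        intro hF
        have := Finset.mem_univ j
        rw [← hF] at this
        simp at this
      · exact smul_zero _)
  have := congrFun hw Finset.univ
  rw [Pi.single_eq_same, kd_apply] at this
  rw [← this]
  exact Submodule.sum_mem _ fun j _ =>
    Submodule.smul_mem_smul (Ideal.subset_span ⟨j, rfl⟩) trivial

end Koszul

/-! ### Membership in the symbolic powers -/

section Monomial

variable {K : Type*} [Field K] {n : ℕ}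

/-- The exponent vectors `e` with `xᵉ ∉ J(G)^{(s)}`. -/
def Low (G : SimpleGraph (Fin n)) (s : ℕ) (e : Fin n →₀ ℕ) : Prop :=
  ∃ u v, G.Adj u v ∧ e u + e v < s

lemma mem_span_pair_pow {u v : Fin n} (huv : u ≠ v) (s : ℕ) (p : MvPolynomial (Fin n) K) :
    p ∈ (Ideal.span {X u, X v} : Ideal (MvPolynomial (Fin n) K)) ^ s ↔
      ∀ e : Fin n →₀ ℕ, e u + e v < s → coeff e p = 0 := by
  constructor
  · induction s generalizing p with
    | zero => intro _ e he; omega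
    | succ s ih =>
      intro hp
      rw [pow_succ] at hp
      induction hp using Submodule.mul_induction_on' with
      | mem_mul_mem a ha b hb =>
        intro e he
        rw [coeff_mul]
        refine Finset.sum_eq_zero fun q hq => ?_
        rw [Finset.HasAntidiagonal.mem_antidiagonal] at hq
        have hu := DFunLike.congr_fun hq u
        have hv := DFunLike.congr_fun hq v
        simp only [Finsupp.add_apply] at hu hv
        by_cases h : q.1 u + q.1 v < s
        · rw [ih a ha _ h, zero_mul]
        · obtain ⟨c, d, rfl⟩ := Ideal.mem_span_pair.1 hb
          have h1 : q.2 u = 0 := by omega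
          have h2 : q.2 v = 0 := by omega
          rw [coeff_add, coeff_mul_X', coeff_mul_X', if_neg (by simpa using h1),
            if_neg (by simpa using h2), add_zero, mul_zero]
      | add a _ b _ ha hb =>
        intro e he
        rw [coeff_add, ha e he, hb e he, add_zero]
  · intro h
    rw [← support_sum_monomial_coeff p]
    refine Submodule.sum_mem _ fun e he => ?_
    have hes : s ≤ e u + e v := by
      by_contra hlt
      exact (mem_support_iff.1 he) (h e (by omega))
    have hle : Finsupp.single u (e u) + Finsupp.single v (e v) ≤ e := by
      intro i
      rw [Finsupp.add_apply, Finsupp.single_apply, Finsupp.single_apply]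
      split_ifs with h1 h2 h2
      · exact absurd (h1.trans h2.symm) huv
      · rw [h1, add_zero]
      · rw [h2, zero_add]
      · simp
    have hmon : monomial e (coeff e p) =
        monomial (e - (Finsupp.single u (e u) + Finsupp.single v (e v))) (coeff e p) *
          (X u ^ e u * X v ^ e v) := by
      rw [← mul_assoc, ← monomial_add_single, ← monomial_add_single, add_assoc,
        tsub_add_cancel_of_le hle]
    rw [hmon]
    refine Ideal.mul_mem_left _ _ (Ideal.pow_le_pow_right hes ?_)
    rw [pow_add]
    exact Ideal.mul_mem_mul (Ideal.pow_mem_pow (Ideal.subset_span (by simp)) _)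
      (Ideal.pow_mem_pow (Ideal.subset_span (by simp)) _)

lemma mem_symbPow_iff {G : SimpleGraph (Fin n)} {s : ℕ} {p : MvPolynomial (Fin n) K} :
    p ∈ coverIdealSymbPow K G s ↔ ∀ e, Low G s e → coeff e p = 0 := by
  simp only [coverIdealSymbPow, Ideal.mem_iInf]
  constructor
  · rintro h e ⟨u, v, huv, he⟩
    exact (mem_span_pair_pow huv.ne s p).1 (h u v huv) e he
  · intro h u v huv
    exact (mem_span_pair_pow huv.ne s p).2 fun e he => h e ⟨u, v, huv, he⟩

lemma mem_maxIdeal_iff {p : MvPolynomial (Fin n) K} : p ∈ maxIdeal K n ↔ coeff 0 p = 0 := by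
  rw [maxIdeal, ← Set.image_univ, mem_ideal_span_X_image]
  constructor
  · intro h
    by_contra h0
    obtain ⟨i, -, hi⟩ := h 0 (mem_support_iff.2 h0)
    exact hi rfl
  · intro h0 m hm
    have : m ≠ 0 := by
      rintro rfl
      exact (mem_support_iff.1 hm) h0
    obtain ⟨i, hi⟩ := Finsupp.ne_iff.1 this
    exact ⟨i, trivial, hi⟩

lemma symbPow_le_maxIdeal {G : SimpleGraph (Fin n)} (hG : G.edgeSet.Nonempty) {s : ℕ}
    (hs : 1 ≤ s) : coverIdealSymbPow K G s ≤ maxIdeal K n := by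
  intro p hp
  obtain ⟨e, he⟩ := hG
  induction e using Sym2.ind with
  | _ u v =>
    exact mem_maxIdeal_iff.2 (mem_symbPow_iff.1 hp 0 ⟨u, v, he, by simp; omega⟩)

/-! ### Transport of exponents -/

/-- The strictly increasing map on exponents carrying the non-members of `J(G)^{(s)}` to those of
`J(G)^{(s+1)}`: of two exponents with sum at least `s` one is raised, and of two exponents with
sum less than `s` at most one is. -/
def phi (s e : ℕ) : ℕ := if s ≤ 2 * e then e + 1 else e

/-- The version of `phi` used for the coordinates in `F` in the `F`-component of the Koszul
complex, where exponents are shifted by `k` in the source and by `k + 1` in the target. -/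
def psi (s k e : ℕ) : ℕ := if e < k then phi s e else phi s (e - k) + (k + 1)

lemma phi_injective (s : ℕ) : Function.Injective (phi s) := by
  intro a b h
  simp only [phi] at h
  split_ifs at h <;> omega

lemma psi_injective (s k : ℕ) : Function.Injective (psi s k) := by
  intro a b h
  simp only [psi, phi] at h
  split_ifs at h <;> omega

/-- The map on exponent vectors in the `F`-component of the Koszul complex. -/
noncomputable def shift (s k : ℕ) (F : Finset (Fin n)) (e : Fin n →₀ ℕ) : Fin n →₀ ℕ :=
  Finsupp.equivFunOnFinite.symm fun u => if u ∈ F then psi s k (e u) else phi s (e u)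

lemma shift_apply (s k : ℕ) (F : Finset (Fin n)) (e : Fin n →₀ ℕ) (u : Fin n) :
    shift s k F e u = if u ∈ F then psi s k (e u) else phi s (e u) := rfl

lemma shift_injective (s k : ℕ) (F : Finset (Fin n)) : Function.Injective (shift s k F) := by
  intro a b h
  ext u
  have := DFunLike.congr_fun h u
  rw [shift_apply, shift_apply] at this
  split_ifs at this
  · exact psi_injective s k this
  · exact phi_injective s this

lemma low_shift {G : SimpleGraph (Fin n)} {s k : ℕ} (hk : s ≤ k) (F : Finset (Fin n))
    (e : Fin n →₀ ℕ) : Low G (s + 1) (shift s k F e) ↔ Low G s e := by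
  refine exists_congr fun u => exists_congr fun v => and_congr_right fun _ => ?_
  -- `psi` differs from `phi` only at exponents so large that membership does not depend on them.
  have key : ∀ w, shift s k F e w = phi s (e w) ∨ (s ≤ e w ∧ s + 1 ≤ shift s k F e w) := by
    intro w
    rw [shift_apply]
    split_ifs
    · by_cases h : e w < k
      · left; simp [psi, h]
      · right
        refine ⟨by omega, ?_⟩
        simp only [psi, if_neg h]; omega
    · exact Or.inl rfl
  rcases key u with hu | hu <;> rcases key v with hv | hv
  · rw [hu, hv]; simp only [phi]; split_ifs <;> omega
  all_goals omega

lemma shift_add_single {s k : ℕ} {F : Finset (Fin n)} {j : Fin n} (hj : j ∈ F)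
    (e : Fin n →₀ ℕ) : shift s k F (Finsupp.single j k + e) =
      Finsupp.single j (k + 1) + shift s k (F.erase j) e := by
  ext u
  rw [shift_apply, Finsupp.add_apply, Finsupp.add_apply, shift_apply]
  by_cases h : u = j
  · subst h
    simp [hj, psi, add_comm]
  · simp [h, Finsupp.single_eq_of_ne h]

lemma single_le_shift_iff {s k : ℕ} {F : Finset (Fin n)} {j : Fin n} (hj : j ∈ F)
    (e : Fin n →₀ ℕ) : Finsupp.single j (k + 1) ≤ shift s k F e ↔ Finsupp.single j k ≤ e := by
  rw [Finsupp.single_le_iff, Finsupp.single_le_iff, shift_apply, if_pos hj]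
  simp only [psi, phi]
  split_ifs <;> omega

/-! ### Transport of polynomials and cochains -/

/-- The additive map sending `xᵉ` to `x^{f(e)}`. -/
noncomputable def push (f : (Fin n →₀ ℕ) → (Fin n →₀ ℕ)) :
    MvPolynomial (Fin n) K →+ MvPolynomial (Fin n) K where
  toFun := AddMonoidAlgebra.mapDomain f
  map_zero' := AddMonoidAlgebra.mapDomain_zero f
  map_add' := AddMonoidAlgebra.mapDomain_add f

/-- The additive map with `x^{f(e)} ↦ xᵉ` that kills the monomials outside the range of `f`. -/
noncomputable def pull (f : (Fin n →₀ ℕ) → (Fin n →₀ ℕ)) (hf : Function.Injective f) :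
    MvPolynomial (Fin n) K →+ MvPolynomial (Fin n) K :=
  AddMonoidAlgebra.comapDomainAddMonoidHom f hf

lemma push_monomial (f : (Fin n →₀ ℕ) → (Fin n →₀ ℕ)) (e : Fin n →₀ ℕ) (c : K) :
    push f (monomial e c) = monomial (f e) c :=
  AddMonoidAlgebra.mapDomain_single

lemma coeff_push {f : (Fin n →₀ ℕ) → (Fin n →₀ ℕ)} (hf : Function.Injective f)
    (p : MvPolynomial (Fin n) K) (e : Fin n →₀ ℕ) : coeff (f e) (push f p) = coeff e p :=
  Finsupp.mapDomain_apply hf _ _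

lemma coeff_push_of_notMem {f : (Fin n →₀ ℕ) → (Fin n →₀ ℕ)}
    (p : MvPolynomial (Fin n) K) {e : Fin n →₀ ℕ} (he : e ∉ Set.range f) :
    coeff e (push f p) = 0 :=
  Finsupp.mapDomain_of_notMem_range _ _ he

lemma coeff_pull {f : (Fin n →₀ ℕ) → (Fin n →₀ ℕ)} (hf : Function.Injective f)
    (p : MvPolynomial (Fin n) K) (e : Fin n →₀ ℕ) : coeff e (pull f hf p) = coeff (f e) p :=
  rfl

lemma pull_push {f : (Fin n →₀ ℕ) → (Fin n →₀ ℕ)} (hf : Function.Injective f)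
    (p : MvPolynomial (Fin n) K) : pull f hf (push f p) = p := by
  ext e
  rw [coeff_pull, coeff_push hf]

lemma push_X_mul {s k : ℕ} {F : Finset (Fin n)} {j : Fin n} (hj : j ∈ F)
    (p : MvPolynomial (Fin n) K) :
    push (shift s k F) (X j ^ k * p) = X j ^ (k + 1) * push (shift s k (F.erase j)) p := by
  induction p using MvPolynomial.induction_on' with
  | monomial e c =>
    rw [← monomial_single_add, push_monomial, push_monomial, shift_add_single hj,
      monomial_single_add]
  | add p q hp hq => rw [mul_add, map_add, map_add, mul_add, hp, hq]

lemma pull_X_mul {s k : ℕ} {F : Finset (Fin n)} {j : Fin n} (hj : j ∈ F)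
    (p : MvPolynomial (Fin n) K) :
    pull (shift s k F) (shift_injective s k F) (X j ^ (k + 1) * p) =
      X j ^ k * pull (shift s k (F.erase j)) (shift_injective s k _) p := by
  ext e
  rw [coeff_pull, X_pow_eq_monomial, X_pow_eq_monomial, coeff_monomial_mul', coeff_monomial_mul',
    coeff_pull]
  by_cases h : Finsupp.single j k ≤ e
  · rw [if_pos h, if_pos ((single_le_shift_iff hj e).2 h)]
    congr 2
    conv_lhs => rw [← add_tsub_cancel_of_le h, shift_add_single hj, add_tsub_cancel_left]
  · rw [if_neg h, if_neg (mt (single_le_shift_iff hj e).1 h)]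

/-- Componentwise transport from the Koszul complex of `(x_jᵏ)` to that of `(x_jᵏ⁺¹)`. -/
noncomputable def pushC (s k : ℕ) (z : Finset (Fin n) → MvPolynomial (Fin n) K) :
    Finset (Fin n) → MvPolynomial (Fin n) K := fun F => push (shift s k F) (z F)

/-- The left inverse of `pushC`. -/
noncomputable def pullC (s k : ℕ) (z : Finset (Fin n) → MvPolynomial (Fin n) K) :
    Finset (Fin n) → MvPolynomial (Fin n) K :=
  fun F => pull (shift s k F) (shift_injective s k F) (z F)

/-- The sequence `x_1ᵏ, …, x_nᵏ`. -/
noncomputable def powSeq (K : Type*) [Field K] (n k : ℕ) (j : Fin n) : MvPolynomial (Fin n) K :=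
  X j ^ k

lemma kd_pushC (s k : ℕ) (z : Finset (Fin n) → MvPolynomial (Fin n) K) :
    kd (powSeq K n (k + 1)) (pushC s k z) = pushC s k (kd (powSeq K n k) z) := by
  ext1 F
  simp only [pushC, kd_apply, map_sum, wedge_apply, powSeq]
  refine Finset.sum_congr rfl fun j _ => ?_
  split_ifs with hj
  · rw [smul_comm, smul_comm (X j ^ k), map_zsmul, smul_eq_mul, smul_eq_mul, push_X_mul hj]
  · simp

lemma kd_pullC (s k : ℕ) (z : Finset (Fin n) → MvPolynomial (Fin n) K) :
    kd (powSeq K n k) (pullC s k z) = pullC s k (kd (powSeq K n (k + 1)) z) := by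
  ext1 F
  simp only [pullC, kd_apply, map_sum, wedge_apply, powSeq]
  refine Finset.sum_congr rfl fun j _ => ?_
  split_ifs with hj
  · rw [smul_comm, smul_comm (X j ^ (k + 1)), map_zsmul, smul_eq_mul, smul_eq_mul,
      pull_X_mul hj]
  · simp

lemma push_mem {G : SimpleGraph (Fin n)} {s k : ℕ} (hk : s ≤ k) (F : Finset (Fin n))
    {p : MvPolynomial (Fin n) K} (hp : p ∈ coverIdealSymbPow K G s) :
    push (shift s k F) p ∈ coverIdealSymbPow K G (s + 1) := by
  rw [mem_symbPow_iff] at hp ⊢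
  intro e he
  by_cases h : e ∈ Set.range (shift s k F)
  · obtain ⟨e, rfl⟩ := h
    rw [coeff_push (shift_injective s k F)]
    exact hp e ((low_shift hk F e).1 he)
  · exact coeff_push_of_notMem p h

lemma pull_mem {G : SimpleGraph (Fin n)} {s k : ℕ} (hk : s ≤ k) (F : Finset (Fin n))
    {p : MvPolynomial (Fin n) K} (hp : p ∈ coverIdealSymbPow K G (s + 1)) :
    pull (shift s k F) (shift_injective s k F) p ∈ coverIdealSymbPow K G s := by
  rw [mem_symbPow_iff] at hp ⊢
  intro e he
  rw [coeff_pull]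
  exact hp _ ((low_shift hk F e).2 he)

/-- Vanishing of the Koszul cohomology of `R/I` in terms of polynomial representatives. -/
lemma kvan_quotient_iff (I : Ideal (MvPolynomial (Fin n) K))
    (y : Fin n → MvPolynomial (Fin n) K) (i : ℕ) :
    KVan (MvPolynomial (Fin n) K ⧸ I) y i ↔
      ∀ z : Finset (Fin n) → MvPolynomial (Fin n) K, Homog i z → (∀ F, kd y z F ∈ I) →
        ∃ w : Finset (Fin n) → MvPolynomial (Fin n) K, (∀ F, F.card + 1 ≠ i → w F = 0) ∧
          ∀ F, z F - kd y w F ∈ I := by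
  classical
  choose g hg using fun m : MvPolynomial (Fin n) K ⧸ I => Submodule.mkQ_surjective I m
  have mk_zero : ∀ p, Submodule.mkQ I p = 0 ↔ p ∈ I := fun p => by
    rw [Submodule.mkQ_apply, Submodule.Quotient.mk_eq_zero]
  constructor
  · intro h z hz hd
    obtain ⟨w, hw, hwz⟩ := h (fun F => Submodule.mkQ I (z F))
      (fun F hF => by simp only [hz F hF, map_zero])
      (by rw [kd_map]; ext1 F; exact (mk_zero _).2 (hd F))
    refine ⟨fun F => if F.card + 1 = i then g (w F) else 0, fun F hF => if_neg hF, fun F => ?_⟩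
    have hlift : w = fun F => Submodule.mkQ I (if F.card + 1 = i then g (w F) else 0) := by
      ext1 F
      split_ifs with hF
      · exact (hg _).symm
      · rw [hw F hF, map_zero]
    rw [hlift, kd_map] at hwz
    rw [← mk_zero, map_sub, sub_eq_zero]
    exact (congrFun hwz F).symm
  · intro h z hz hd
    have hlift : z = fun F => Submodule.mkQ I (if F.card = i then g (z F) else 0) := by
      ext1 F
      split_ifs with hF
      · exact (hg _).symm
      · rw [hz F hF, map_zero]
    rw [hlift, kd_map] at hd
    obtain ⟨w, hw, hwz⟩ := h (fun F => if F.card = i then g (z F) else 0)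
      (fun F hF => if_neg hF) (fun F => (mk_zero _).1 (congrFun hd F))
    refine ⟨fun F => Submodule.mkQ I (w F), fun F hF => by simp only [hw F hF, map_zero], ?_⟩
    rw [kd_map, hlift]
    ext1 F
    rw [← sub_eq_zero, ← map_sub, mk_zero, ← neg_sub]
    exact I.neg_mem (hwz F)

/-- The Koszul complex of `R/J(G)^{(s)}` is a direct summand, over `K`, of that of
`R/J(G)^{(s+1)}`. -/
lemma kvan_transfer {G : SimpleGraph (Fin n)} {s k : ℕ} (hk : s ≤ k) {i : ℕ}
    (h : KVan (MvPolynomial (Fin n) K ⧸ coverIdealSymbPow K G (s + 1)) (powSeq K n (k + 1)) i) :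
    KVan (MvPolynomial (Fin n) K ⧸ coverIdealSymbPow K G s) (powSeq K n k) i := by
  rw [kvan_quotient_iff] at h ⊢
  intro z hz hd
  obtain ⟨w, hw, hwz⟩ := h (pushC s k z) (fun F hF => by rw [pushC, hz F hF, map_zero])
    (fun F => by rw [kd_pushC]; exact push_mem hk F (hd F))
  refine ⟨pullC s k w, fun F hF => by rw [pullC, hw F hF, map_zero], fun F => ?_⟩
  have := pull_mem hk F (hwz F)
  rw [map_sub, pushC, pull_push] at this
  rwa [kd_pullC]

/-! ### Depth -/

lemma span_powSeq_le {k : ℕ} (hk : 1 ≤ k) :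
    Ideal.span (Set.range (powSeq K n k)) ≤ maxIdeal K n := by
  rw [Ideal.span_le]
  rintro _ ⟨j, rfl⟩
  have hj : (X j : MvPolynomial (Fin n) K) ∈ maxIdeal K n := Ideal.subset_span ⟨j, rfl⟩
  exact Ideal.pow_mem_of_mem _ hj k hk

lemma maxIdeal_le_radical (k : ℕ) :
    maxIdeal K n ≤ (Ideal.span (Set.range (powSeq K n k))).radical := by
  rw [maxIdeal, Ideal.span_le]
  rintro _ ⟨j, rfl⟩
  have hj : powSeq K n k j ∈ Ideal.span (Set.range (powSeq K n k)) := Ideal.subset_span ⟨j, rfl⟩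
  exact ⟨k, hj⟩

lemma maxIdeal_smul_top_ne {I : Ideal (MvPolynomial (Fin n) K)} (hI : I ≤ maxIdeal K n) :
    maxIdeal K n • (⊤ : Submodule (MvPolynomial (Fin n) K) (MvPolynomial (Fin n) K ⧸ I)) ≠ ⊤ := by
  intro h
  have h1 : Submodule.mkQ I 1 ∈
      maxIdeal K n • (⊤ : Submodule (MvPolynomial (Fin n) K) (MvPolynomial (Fin n) K ⧸ I)) := by
    rw [h]; trivial
  rw [← Submodule.range_mkQ I, LinearMap.range_eq_map, ← Submodule.map_smul''] at h1
  obtain ⟨p, hp, hp1⟩ := h1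
  have hpm : p ∈ maxIdeal K n := by simpa using hp
  rw [← sub_eq_zero, ← map_sub, Submodule.mkQ_apply, Submodule.Quotient.mk_eq_zero] at hp1
  have h1m : (1 : MvPolynomial (Fin n) K) ∈ maxIdeal K n := by
    have := (maxIdeal K n).sub_mem hpm (hI hp1)
    rwa [sub_sub_cancel] at this
  rw [mem_maxIdeal_iff] at h1m
  simp at h1m

/-- Koszul cohomology of any powers of the variables detects the lengths of regular sequences. -/
lemma exists_isRegular_iff {I : Ideal (MvPolynomial (Fin n) K)} (hI : I ≤ maxIdeal K n) {k : ℕ}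
    (hk : 1 ≤ k) (d : ℕ) :
    (∃ rs : List (MvPolynomial (Fin n) K), rs.length = d ∧ (∀ r ∈ rs, r ∈ maxIdeal K n) ∧
      RingTheory.Sequence.IsRegular ((MvPolynomial (Fin n) K) ⧸ I) rs) ↔
    ∀ i < d, KVan (MvPolynomial (Fin n) K ⧸ I) (powSeq K n k) i := by
  constructor
  · rintro ⟨rs, rfl, hm, hreg⟩
    exact kvan_of_isWeaklyRegular (fun r hr => maxIdeal_le_radical k (hm r hr))
      hreg.toIsWeaklyRegular
  · intro h
    obtain ⟨rs, hl, hm, hw⟩ := exists_isWeaklyRegular d h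
    have hm' : ∀ r ∈ rs, r ∈ maxIdeal K n := fun r hr => span_powSeq_le hk (hm r hr)
    refine ⟨rs, hl, hm', hw, fun htop => maxIdeal_smul_top_ne hI (top_le_iff.1 ?_)⟩
    refine htop.le.trans (Submodule.smul_mono_left ?_)
    rw [Ideal.ofList, Ideal.span_le]
    exact hm'

end Monomial

end SymbDepth

/-- For a graph `G` with at least one edge, the sequence of symbolic-power depths of the
cover ideal is non-increasing: `depth(R/J(G)^{(s)}) ≥ depth(R/J(G)^{(s+1)})` for all `s ≥ 1`. -/
theorem depth_coverIdealSymbPow_antitone (K : Type*) [Field K] (n : ℕ)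
    (G : SimpleGraph (Fin n)) (hG : G.edgeSet.Nonempty) (s : ℕ) (hs : 1 ≤ s) :
    depthQuot K n (coverIdealSymbPow K G (s + 1)) ≤ depthQuot K n (coverIdealSymbPow K G s) := by
  have hI := SymbDepth.symbPow_le_maxIdeal (K := K) hG hs
  have hI' := SymbDepth.symbPow_le_maxIdeal (K := K) hG (Nat.le_add_left 1 s)
  simp only [depthQuot, SymbDepth.exists_isRegular_iff hI hs,
    SymbDepth.exists_isRegular_iff hI' (Nat.le_add_left 1 s)]
  refine csSup_le_csSup ⟨n, fun d hd => ?_⟩ ⟨0, fun i hi => absurd hi (Nat.not_lt_zero i)⟩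
    fun d hd i hi => SymbDepth.kvan_transfer le_rfl (hd i hi)
  -- No regular sequence is longer than `n`, as the top Koszul cohomology does not vanish; without
  -- this bound the supremum would take its junk value.
  by_contra! hlt
  have htop := SymbDepth.smul_top_of_kvan_card (hd (Fintype.card (Fin n)) (by simpa using hlt))
  refine SymbDepth.maxIdeal_smul_top_ne hI (top_le_iff.1 (htop.ge.trans ?_))
  exact Submodule.smul_mono_left (SymbDepth.span_powSeq_le hs)
end

section
/- Let G be a finite simple graph on vertex set {1,…,n} with at least one edge, K a field, R = K[x_1,…,x_n], and J(G) its cover ideal. Then for every integer s ≥ 2ν₀(G) − 1, depth(R/J(G)^{(s)}) = n − ν₀(G) − 1, where ν₀(G) is the ordered matching number of G. -/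
/-!
Write `R = K[x_1,…,x_n]`, `J = J(G)` and `ν = ν₀(G)`. The depth of `R/I` is `n - j`, where `j` is the
largest degree in which the Koszul homology of `R/I` with respect to elements generating an ideal of
radical `(x_1,…,x_n)` is nonzero. The proof uses this in two halves: a regular sequence of length `d`
makes the Koszul homology vanish in degrees `> n - d` (`kvan_of_isWeaklyRegular`), and vanishing in
degrees `> p` produces a regular sequence of length `n - p` by prime avoidance
(`exists_isWeaklyRegular_of_kvan`).

*Lower bound on the depth, for every `s`.* The Koszul complex of `J^{(s)}` on the variables is
multigraded, since `J^{(s)}` is spanned by the monomials `x^a` with `a_u + a_v ≥ s` on every edge. Its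
piece of multidegree `b` is the chain complex of a simplicial complex, which is either empty or the
complex of all `F ⊆ W` that contain no edge `{u, v}` with `b_u + b_v = s + 1`, where `W` is a set of
vertices such that `b_u + b_v ≥ s + 1` on all edges inside `W`. The homology of these complexes
vanishes in dimensions `≥ ν` (`bdd_deltaW`), by induction on `W`. Remove a vertex `x ∈ W` with `b_x`
minimal. If no `w ∈ W` has `{x, w}` an edge with `b_x + b_w = s + 1`, the complex is a cone over `x`.
Otherwise consider the link of `x`: if it has a vertex `u` adjacent to `x` in `G`, then
`b_u + b_z ≥ b_u + b_x ≥ s + 2` for every `z`, so the link is a cone over `u`; if not, an ordered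
matching in the link extends by the edge `{x, w}`, so ordered matchings in the link have size
`≤ ν - 1`. Hence the Koszul homology of `R/J^{(s)}` vanishes in degrees `> ν + 1` (`kvan_symbPow`).

*Upper bound on the depth, for `s ≥ 2ν - 1`.* Let `{u_i, v_i}`, `0 ≤ i < ν`, be an ordered matching.
There is a monomial `f = x^a` with `J^{(s)} : f = ⋂ (x_{u_i}, x_{v_i})`, given by
`a_{u_i} = ν - 1 - i`, `a_{v_i} = s - ν + i` and `a_w = s` at all other vertices. Take the Koszul
complex on the elements `x_{u_i}`, `x_{v_i}` and `x_w^{s+1}`. The product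
`z = ∏ (x_{v_i} e_{u_i} - x_{u_i} e_{v_i})` is a cycle of degree `ν` whose coefficients lie in
`⋂ (x_{u_i}, x_{v_i})`, so `f z` is a cycle with coefficients in `J^{(s)}`. It bounds over `R`, but not
over `J^{(s)}`: comparing coefficients of `f ∏ x_{v_i}` at `e_{u_0} ∧ ⋯ ∧ e_{u_{ν-1}}` would require a
monomial of `J^{(s)}` that has degree `s - 1` in `x_{u_i}`, `x_{v_i}` for some `i`, or that `x_w^{s+1}`
divides `f ∏ x_{v_i}` for some other `w`; both are impossible. So `H_{ν+1}(R/J^{(s)}) ≠ 0`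
(`not_kvan_symbPow`).
-/

open MvPolynomial

/-- An ordered matching of size `s` in `G`, given by edges `{u i, v i}`:
the edges form a matching (all `2s` endpoints are distinct), `{u 1,…,u s}` is an
independent set, and `{u i, v j} ∈ E(G)` implies `i ≤ j`. -/
def IsOrderedMatching {V : Type*} (G : SimpleGraph V) {s : ℕ} (u v : Fin s → V) : Prop :=
  (∀ i, G.Adj (u i) (v i)) ∧
  (Function.Injective (fun p : Fin s × Bool => if p.2 then u p.1 else v p.1)) ∧
  (∀ i j, ¬ G.Adj (u i) (u j)) ∧
  (∀ i j, G.Adj (u i) (v j) → i ≤ j)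

/-- The ordered matching number `ν₀(G)`: the maximum size of an ordered matching in `G`. -/
noncomputable def orderedMatchingNumber {V : Type*} (G : SimpleGraph V) : ℕ :=
  sSup {s : ℕ | ∃ u v : Fin s → V, IsOrderedMatching G u v}

/-! ### The Koszul complex of a sequence of ring elements -/

/-- The sign `(-1)^{#{k ∈ F : k < i}}` relating `e_i ∧ e_F` to `e_{F ∪ {i}}`. -/
def kSgn {n : ℕ} (i : Fin n) (F : Finset (Fin n)) : ℤ :=
  (-1) ^ (F.filter (· < i)).card

lemma kSgn_mul_self {n : ℕ} (i : Fin n) (F : Finset (Fin n)) : kSgn i F * kSgn i F = 1 := by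
  unfold kSgn
  rw [← pow_add, ← two_mul, pow_mul]
  simp

lemma kSgn_insert {n : ℕ} (i j : Fin n) (F : Finset (Fin n)) (hj : j ∉ F) :
    kSgn i (insert j F) = if j < i then - kSgn i F else kSgn i F := by
  unfold kSgn
  rw [Finset.filter_insert]
  split_ifs with h
  · rw [Finset.card_insert_of_notMem (by simp [hj]), pow_succ]
    ring
  · rfl

lemma kSgn_comm {n : ℕ} {i j : Fin n} {F : Finset (Fin n)} (hij : i ≠ j) (hi : i ∉ F)
    (hj : j ∉ F) :
    kSgn i F * kSgn j (insert i F) = - (kSgn j F * kSgn i (insert j F)) := by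
  rw [kSgn_insert j i F hi, kSgn_insert i j F hj]
  rcases lt_or_gt_of_ne hij with h | h
  · simp [h, h.not_gt]; ring
  · simp [h, h.not_gt]; ring

lemma kSgn_comm' {n : ℕ} {i j : Fin n} {F : Finset (Fin n)} (hij : i ≠ j) (hi : i ∉ F)
    (hj : j ∉ F) :
    kSgn i (insert j F) * kSgn j (insert i F) = - (kSgn j F * kSgn i F) := by
  rw [kSgn_insert j i F hi, kSgn_insert i j F hj]
  rcases lt_or_gt_of_ne hij with h | h
  · simp [h, h.not_gt]; ring
  · simp [h, h.not_gt]; ring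

/-- Contraction with the `i`-th dual basis vector on `M ⊗ ⋀ Rⁿ`. An element of `M ⊗ ⋀ Rⁿ` is
encoded by its coefficients `c F` at the basis vectors `e_F`, for `F` a subset of `Fin n`. -/
def contr {n : ℕ} (R M : Type*) [CommRing R] [AddCommGroup M] [Module R M] (i : Fin n) :
    (Finset (Fin n) → M) →ₗ[R] (Finset (Fin n) → M) where
  toFun c F := if i ∈ F then 0 else kSgn i F • c (insert i F)
  map_add' c d := by
    funext F; dsimp; split_ifs <;> simp
  map_smul' r c := by
    funext F; dsimp; split_ifs
    · simp
    · rw [smul_comm]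

/-- Exterior multiplication by the `i`-th basis vector on `M ⊗ ⋀ Rⁿ`. -/
def wedge {n : ℕ} (R M : Type*) [CommRing R] [AddCommGroup M] [Module R M] (i : Fin n) :
    (Finset (Fin n) → M) →ₗ[R] (Finset (Fin n) → M) where
  toFun c F := if i ∈ F then kSgn i (F.erase i) • c (F.erase i) else 0
  map_add' c d := by
    funext F; dsimp; split_ifs <;> simp
  map_smul' r c := by
    funext F; dsimp; split_ifs
    · rw [smul_comm]
    · simp

/-- The Koszul differential of the sequence `y`, on all exterior degrees at once. -/
def kd {n : ℕ} {R : Type*} (M : Type*) [CommRing R] [AddCommGroup M] [Module R M]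
    (y : Fin n → R) : (Finset (Fin n) → M) →ₗ[R] (Finset (Fin n) → M) :=
  ∑ i, y i • contr R M i

section Koszul

variable {n : ℕ} {R M : Type*} [CommRing R] [AddCommGroup M] [Module R M]

lemma contr_apply (i : Fin n) (c : Finset (Fin n) → M) (F : Finset (Fin n)) :
    contr R M i c F = if i ∈ F then 0 else kSgn i F • c (insert i F) := rfl

lemma wedge_apply (i : Fin n) (c : Finset (Fin n) → M) (F : Finset (Fin n)) :
    wedge R M i c F = if i ∈ F then kSgn i (F.erase i) • c (F.erase i) else 0 := rfl

lemma kd_eq_sum (y : Fin n → R) (c : Finset (Fin n) → M) :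
    kd M y c = ∑ i, y i • contr R M i c := by
  simp [kd]

lemma kd_apply (y : Fin n → R) (c : Finset (Fin n) → M) (F : Finset (Fin n)) :
    kd M y c F = ∑ i, y i • (if i ∈ F then 0 else kSgn i F • c (insert i F)) := by
  simp [kd_eq_sum, contr_apply]

lemma contr_contr (i j : Fin n) (c : Finset (Fin n) → M) :
    contr R M i (contr R M j c) = - contr R M j (contr R M i c) := by
  funext F
  simp only [contr_apply, Pi.neg_apply]
  rcases eq_or_ne i j with rfl | hij
  · simp
  by_cases hi : i ∈ F
  · simp [hi]
  by_cases hj : j ∈ F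
  · simp [hj]
  simp only [hi, hj, Finset.mem_insert, hij, hij.symm, if_false, or_self, smul_smul]
  rw [kSgn_comm hij hi hj, Finset.insert_comm, neg_smul]

lemma contr_contr_self (i : Fin n) (c : Finset (Fin n) → M) :
    contr R M i (contr R M i c) = 0 := by
  funext F
  simp [contr_apply]

lemma contr_wedge_self (i : Fin n) (c : Finset (Fin n) → M) :
    contr R M i (wedge R M i c) + wedge R M i (contr R M i c) = c := by
  funext F
  simp only [contr_apply, wedge_apply, Pi.add_apply]
  by_cases hi : i ∈ F
  · simp [hi, smul_smul, kSgn_mul_self]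
  · simp [hi, smul_smul, kSgn_mul_self]

lemma contr_wedge_of_ne {i j : Fin n} (hij : i ≠ j) (c : Finset (Fin n) → M) :
    contr R M i (wedge R M j c) + wedge R M j (contr R M i c) = 0 := by
  funext F
  simp only [contr_apply, wedge_apply, Pi.add_apply, Pi.zero_apply]
  by_cases hi : i ∈ F
  · simp [hi, hij]
  by_cases hj : j ∈ F
  · obtain ⟨G, hG, rfl⟩ : ∃ G, j ∉ G ∧ F = insert j G :=
      ⟨F.erase j, by simp, by simp [Finset.insert_erase hj]⟩
    have hiG : i ∉ G := fun h => hi (by simp [h])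
    have e1 : (insert i (insert j G)).erase j = insert i G := by
      rw [Finset.insert_comm, Finset.erase_insert]; simp [hij.symm, hG]
    simp only [hi, hiG, Finset.mem_insert, true_or, or_true, if_true, if_false, e1,
      Finset.erase_insert hG, smul_smul]
    rw [kSgn_comm' hij hiG hG, ← add_smul]
    simp
  · simp [hi, hj, hij.symm]

lemma contr_kd (y : Fin n → R) (i : Fin n) (c : Finset (Fin n) → M) :
    contr R M i (kd M y c) = - kd M y (contr R M i c) := by
  simp only [kd_eq_sum, map_sum, map_smul]
  rw [← Finset.sum_neg_distrib]
  refine Finset.sum_congr rfl fun j _ => ?_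
  rw [contr_contr, smul_neg]

lemma kd_kd (y : Fin n → R) (c : Finset (Fin n) → M) : kd M y (kd M y c) = 0 := by
  simp only [kd_eq_sum, map_sum, map_smul, Finset.smul_sum]
  rw [← Finset.sum_product']
  refine Finset.sum_involution (fun p _ => (p.2, p.1)) ?_ ?_ ?_ ?_
  · rintro ⟨i, j⟩ -
    dsimp
    rw [contr_contr i j, smul_neg, smul_neg, smul_smul, smul_smul, mul_comm (y j)]
    simp
  · rintro ⟨i, j⟩ - h
    contrapose! h
    obtain rfl : j = i := congrArg Prod.fst h
    simp [contr_contr_self]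
  · simp
  · simp

/-- Exterior multiplication by `e_i` is a homotopy between `0` and multiplication by `y_i`. -/
lemma kd_wedge (y : Fin n → R) (i : Fin n) (c : Finset (Fin n) → M) :
    kd M y (wedge R M i c) + wedge R M i (kd M y c) = y i • c := by
  simp only [kd_eq_sum, map_sum, map_smul]
  rw [← Finset.sum_add_distrib, Finset.sum_eq_single i]
  · rw [← smul_add, contr_wedge_self]
  · intro j _ hj
    rw [← smul_add, contr_wedge_of_ne hj, smul_zero]
  · simp

/-- The Koszul homology of `y` on `M` vanishes in every degree greater than `p`. As the degrees do
not interact, this can be tested on cycles that mix several degrees greater than `p`. -/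
def KVan (p : ℕ) (M : Type*) [AddCommGroup M] [Module R M] (y : Fin n → R) : Prop :=
  ∀ c : Finset (Fin n) → M, (∀ F, F.card ≤ p → c F = 0) → kd M y c = 0 → ∃ t, kd M y t = c

/-- A boundary concentrated in degrees `> p` bounds a chain concentrated in degrees `> p + 1`. -/
lemma exists_truncated (y : Fin n → R) (p : ℕ) (P : Finset (Fin n) → Prop)
    (c t : Finset (Fin n) → M) (hc : ∀ F, F.card ≤ p → c F = 0) (ht : kd M y t = c)
    (htP : ∀ F, t F ≠ 0 → P F) :
    ∃ t', (∀ F, F.card ≤ p + 1 → t' F = 0) ∧ kd M y t' = c ∧ (∀ F, t' F ≠ 0 → P F) := by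
  refine ⟨fun F => if F.card ≤ p + 1 then 0 else t F, fun F hF => if_pos hF, ?_, ?_⟩
  · funext F
    by_cases hF : F.card ≤ p
    · rw [hc F hF, kd_apply]
      refine Finset.sum_eq_zero fun i _ => ?_
      have := Finset.card_insert_le i F
      rw [if_pos (show (insert i F).card ≤ p + 1 by omega)]
      simp
    · rw [← ht, kd_apply, kd_apply]
      refine Finset.sum_congr rfl fun i _ => ?_
      by_cases hi : i ∈ F
      · simp [hi]
      · have := Finset.card_insert_of_notMem hi
        rw [if_neg (show ¬ (insert i F).card ≤ p + 1 by omega)]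
  · intro F hF
    dsimp at hF
    split_ifs at hF
    · exact absurd rfl hF
    · exact htP F hF

lemma wedge_card_lt (i : Fin n) (p : ℕ) (c : Finset (Fin n) → M)
    (hc : ∀ F, F.card < p → c F = 0) : ∀ F, F.card < p + 1 → wedge R M i c F = 0 := by
  intro F hF
  rw [wedge_apply]
  split_ifs with h
  · have := Finset.card_pos.2 ⟨i, h⟩
    rw [hc, smul_zero]
    rw [Finset.card_erase_of_mem h]; omega
  · rfl

lemma wedge_card (i : Fin n) (p : ℕ) (c : Finset (Fin n) → M)
    (hc : ∀ F, F.card ≤ p → c F = 0) : ∀ F, F.card ≤ p + 1 → wedge R M i c F = 0 := by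
  intro F hF
  rw [wedge_apply]
  split_ifs with h
  · rw [hc, smul_zero]
    rw [Finset.card_erase_of_mem h]; omega
  · rfl

lemma contr_card (i : Fin n) (p : ℕ) (c : Finset (Fin n) → M)
    (hc : ∀ F, F.card ≤ p + 1 → c F = 0) : ∀ F, F.card ≤ p → contr R M i c F = 0 := by
  intro F hF
  rw [contr_apply]
  split_ifs with h
  · rfl
  · rw [hc, smul_zero]
    rw [Finset.card_insert_of_notMem h]; omega

/-- The Koszul differential commutes with maps of coefficient modules. -/
lemma kd_map {N : Type*} [AddCommGroup N] [Module R N] (φ : M →ₗ[R] N) (y : Fin n → R)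
    (c : Finset (Fin n) → M) : kd N y (fun F => φ (c F)) = fun F => φ (kd M y c F) := by
  funext F
  simp only [kd_apply, map_sum, map_smul]
  refine Finset.sum_congr rfl fun i _ => ?_
  split_ifs <;> simp

end Koszul

/-! ### Vanishing homology of independence complexes -/

/-- The chain complex of a simplicial complex: `Bdd Δ p` says that every cycle supported on faces of
`Δ` with more than `p` elements bounds a chain supported on `Δ`. Equivalently, the reduced homology
of `Δ` over `K` vanishes in dimensions `≥ p`. -/
def Bdd {n : ℕ} (K : Type*) [Field K] (Δ : Finset (Fin n) → Prop) (p : ℕ) : Prop :=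
  ∀ c : Finset (Fin n) → K, (∀ F, F.card ≤ p → c F = 0) → (∀ F, c F ≠ 0 → Δ F) →
    kd (R := K) K 1 c = 0 → ∃ t, (∀ F, t F ≠ 0 → Δ F) ∧ kd (R := K) K 1 t = c

section Bdd

variable {n : ℕ} {K : Type*} [Field K]

lemma contr_supp {Δ : Finset (Fin n) → Prop} (i : Fin n) (c : Finset (Fin n) → K)
    (hc : ∀ F, c F ≠ 0 → Δ F) (F : Finset (Fin n)) (h : contr K K i c F ≠ 0) :
    i ∉ F ∧ Δ (insert i F) := by
  rw [contr_apply] at h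
  split_ifs at h with hi
  · exact absurd rfl h
  · exact ⟨hi, hc _ fun h0 => h (by rw [h0, smul_zero])⟩

lemma wedge_supp {Δ : Finset (Fin n) → Prop} (i : Fin n) (c : Finset (Fin n) → K)
    (hc : ∀ F, c F ≠ 0 → Δ F) (F : Finset (Fin n)) (h : wedge K K i c F ≠ 0) :
    i ∈ F ∧ Δ (F.erase i) := by
  rw [wedge_apply] at h
  split_ifs at h with hi
  · exact ⟨hi, hc _ fun h0 => h (by rw [h0, smul_zero])⟩
  · exact absurd rfl h

/-- A cone has no reduced homology. -/
lemma bdd_of_cone {Δ : Finset (Fin n) → Prop} (i : Fin n)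
    (hi : ∀ F, Δ (F.erase i) → Δ F) (p : ℕ) :
    Bdd K Δ p := by
  intro c _ hc hd
  refine ⟨wedge K K i c, fun F hF => ?_, ?_⟩
  · exact hi F (wedge_supp i c hc F hF).2
  · have := kd_wedge (1 : Fin n → K) i c
    rw [hd] at this
    simpa using this

/-- The exact sequence of a vertex `i`: vanishing for the deletion and, one degree lower, for the
link of `i` implies vanishing for the whole complex. -/
lemma bdd_of_link_of_del {Δ : Finset (Fin n) → Prop} (i : Fin n) (p : ℕ)
    (hdown : ∀ F, Δ (insert i F) → Δ F)
    (hlink : Bdd K (fun F => i ∉ F ∧ Δ (insert i F)) p)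
    (hdel : Bdd K (fun F => i ∉ F ∧ Δ F) (p + 1)) : Bdd K Δ (p + 1) := by
  intro c hcard hc hd
  have hd1 : kd (R := K) K 1 (contr K K i c) = 0 := by
    have := contr_kd (1 : Fin n → K) i c
    rw [hd, map_zero] at this
    exact neg_eq_zero.mp this.symm
  obtain ⟨t, htΔ, ht⟩ := hlink (contr K K i c) (contr_card i p c hcard)
    (fun F hF => contr_supp i c hc F hF) hd1
  obtain ⟨t, htc, ht, htΔ⟩ := exists_truncated (1 : Fin n → K) p _ _ t
    (contr_card i p c hcard) ht htΔ
  -- Adding the boundary of `e_i ∧ t` removes from `c` all the faces that contain `i`.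
  have key : c + kd (R := K) K 1 (wedge K K i t) = contr K K i (wedge K K i c) + t := by
    have h1 := kd_wedge (1 : Fin n → K) i t
    have h2 := contr_wedge_self (R := K) i c
    rw [ht] at h1
    rw [Pi.one_apply, one_smul] at h1
    nth_rewrite 1 [← h2]
    rw [add_assoc, add_comm (wedge K K i _), h1]
  have := hdel (c + kd (R := K) K 1 (wedge K K i t)) ?_ ?_ ?_
  · obtain ⟨t0, ht0Δ, ht0⟩ := this
    refine ⟨t0 - wedge K K i t, fun F hF => ?_, ?_⟩
    · by_cases h0 : t0 F = 0
      · have : wedge K K i t F ≠ 0 := by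
          intro h; apply hF; simp [h0, h]
        obtain ⟨hiF, -, h⟩ := wedge_supp i t htΔ F this
        rwa [Finset.insert_erase hiF] at h
      · exact (ht0Δ F h0).2
    · rw [map_sub, ht0]; simp
  · intro F hF
    rw [key, Pi.add_apply, htc F hF, add_zero]
    exact contr_card i (p + 1) _ (wedge_card i (p + 1) c hcard) F hF
  · intro F hF
    rw [key, Pi.add_apply] at hF
    by_cases h0 : t F = 0
    · rw [h0, add_zero] at hF
      obtain ⟨h1, -, h2⟩ := contr_supp (Δ := fun F => i ∈ F ∧ Δ (F.erase i)) i _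
        (fun F hF => wedge_supp i c hc F hF) F hF
      rw [Finset.erase_insert h1] at h2
      exact ⟨h1, h2⟩
    · exact ⟨(htΔ F h0).1, hdown F (htΔ F h0).2⟩
  · rw [map_add, hd, kd_kd, add_zero]

lemma orderedMatching_injective_iff {V : Type*} {k : ℕ} (u v : Fin k → V) :
    (Function.Injective (fun p : Fin k × Bool => if p.2 then u p.1 else v p.1)) ↔
      Function.Injective u ∧ Function.Injective v ∧ ∀ i j, u i ≠ v j := by
  constructor
  · intro h
    refine ⟨fun i j hij => ?_, fun i j hij => ?_, fun i j hij => ?_⟩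
    · have := @h (i, true) (j, true) (by simpa using hij)
      simpa using this
    · have := @h (i, false) (j, false) (by simpa using hij)
      simpa using this
    · have := @h (i, true) (j, false) (by simpa using hij)
      simp at this
  · rintro ⟨hu, hv, huv⟩ ⟨i, a⟩ ⟨j, b⟩ h
    cases a <;> cases b <;> simp at h ⊢
    · exact hv h
    · exact huv _ _ h.symm
    · exact huv _ _ h
    · exact hu h

/-- An ordered matching none of whose vertices is adjacent to `x` can be extended by an edge
`{x, w}`, put in last position. -/
lemma isOrderedMatching_snoc {V : Type*} {G : SimpleGraph V} {k : ℕ} {u v : Fin k → V}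
    (h : IsOrderedMatching G u v) {x w : V} (hxw : G.Adj x w)
    (hu : ∀ i, u i ≠ x ∧ u i ≠ w ∧ ¬ G.Adj x (u i))
    (hv : ∀ i, v i ≠ x ∧ v i ≠ w ∧ ¬ G.Adj x (v i)) :
    IsOrderedMatching G (Fin.snoc u x : Fin (k + 1) → V) (Fin.snoc v w : Fin (k + 1) → V) := by
  obtain ⟨h1, h2, h3, h4⟩ := h
  obtain ⟨hui, hvi, huv⟩ := (orderedMatching_injective_iff u v).1 h2
  refine ⟨fun i => ?_, (orderedMatching_injective_iff _ _).2 ⟨?_, ?_, ?_⟩, ?_, ?_⟩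
  · induction i using Fin.lastCases <;> simp [h1, hxw]
  · rw [Fin.snoc_injective_iff]
    exact ⟨hui, by rintro ⟨i, hi⟩; exact (hu i).1 hi⟩
  · rw [Fin.snoc_injective_iff]
    exact ⟨hvi, by rintro ⟨i, hi⟩; exact (hv i).2.1 hi⟩
  · intro i j
    induction i using Fin.lastCases <;> induction j using Fin.lastCases <;>
      simp [hxw.ne, huv, hu, fun i => (hv i).1.symm]
  · intro i j
    induction i using Fin.lastCases <;> induction j using Fin.lastCases <;>
      simp [h3, hu, G.adj_comm _ x]
  · intro i j
    induction j using Fin.lastCases with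
    | last => intro _; exact Fin.le_last i
    | cast j =>
      induction i using Fin.lastCases with
      | last => intro h; simp [hv] at h
      | cast i => simpa using h4 i j

/-- The faces with vertices in `W` that contain no edge `{u, v}` of `G` with `b u + b v ≤ s + 1`. -/
def DeltaW {n : ℕ} (G : SimpleGraph (Fin n)) (s : ℕ) (b : Fin n → ℕ) (W F : Finset (Fin n)) :
    Prop :=
  F ⊆ W ∧ ∀ u ∈ F, ∀ v ∈ F, G.Adj u v → s + 2 ≤ b u + b v

lemma DeltaW.mono {G : SimpleGraph (Fin n)} {s : ℕ} {b : Fin n → ℕ} {W F F' : Finset (Fin n)}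
    (h : DeltaW G s b W F) (hF : F' ⊆ F) : DeltaW G s b W F' :=
  ⟨hF.trans h.1, fun u hu v hv => h.2 u (hF hu) v (hF hv)⟩

lemma bdd_deltaW_of_cone (G : SimpleGraph (Fin n)) (s : ℕ) (b : Fin n → ℕ) (W : Finset (Fin n))
    (x : Fin n) (hx : x ∈ W) (h : ∀ u ∈ W, G.Adj x u → s + 2 ≤ b x + b u) (p : ℕ) :
    Bdd K (DeltaW G s b W) p := by
  refine bdd_of_cone x (fun F hF => ?_) p
  have hFW : F ⊆ W := by
    intro u hu
    by_cases hux : u = x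
    · rwa [hux]
    · exact hF.1 (by simp [hux, hu])
  refine ⟨hFW, fun u hu v hv huv => ?_⟩
  by_cases hux : u = x
  · subst hux; exact h v (hFW hv) huv
  by_cases hvx : v = x
  · subst hvx; rw [add_comm (b u)]; exact h u (hFW hu) huv.symm
  · exact hF.2 u (by simp [hux, hu]) v (by simp [hvx, hv]) huv

/-- The ordered matching number bounds the homological dimension of the complexes `DeltaW`. The
induction removes a vertex `x` of `W` with `b x` minimal: a vertex of the link of `x` that is
`G`-adjacent to `x` is then a cone point of the link, so that either the link is acyclic, or no
vertex of the link is adjacent to `x` and ordered matchings in the link extend by an edge at `x`. -/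
lemma bdd_deltaW (G : SimpleGraph (Fin n)) (s : ℕ) (b : Fin n → ℕ) (m : ℕ) :
    ∀ (W : Finset (Fin n)) (p : ℕ), W.card = m →
    (∀ k (u v : Fin k → Fin n), IsOrderedMatching G u v → (∀ i, u i ∈ W) → (∀ i, v i ∈ W) →
      k ≤ p) → (∀ u ∈ W, ∀ v ∈ W, G.Adj u v → s + 1 ≤ b u + b v) →
    Bdd K (DeltaW G s b W) p := by
  classical
  induction m using Nat.strong_induction_on with
  | _ m IH =>
  intro W p hm hp hW
  rcases W.eq_empty_or_nonempty with rfl | hne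
  · intro c hcard hc _
    refine ⟨0, by simp, ?_⟩
    funext F
    by_contra h
    have hF : c F ≠ 0 := fun h' => h (by simp [h'])
    have := Finset.subset_empty.1 (hc F hF).1
    exact hF (hcard F (by simp [this]))
  obtain ⟨x, hx, hmin⟩ := W.exists_min_image b hne
  by_cases hcone : ∀ u ∈ W, G.Adj x u → s + 2 ≤ b x + b u
  · exact bdd_deltaW_of_cone G s b W x hx hcone p
  push Not at hcone
  obtain ⟨w, hw, hxw, hlt⟩ := hcone
  have hp1 : 1 ≤ p := by
    refine hp 1 (fun _ => x) (fun _ => w) ⟨fun _ => hxw,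
      (orderedMatching_injective_iff _ _).2 ⟨fun i j _ => Subsingleton.elim i j,
        fun i j _ => Subsingleton.elim i j, fun _ _ => hxw.ne⟩, by simp, fun i j _ => ?_⟩
      (fun _ => hx) (fun _ => hw)
    exact (Subsingleton.elim i j).le
  obtain ⟨p, rfl⟩ : ∃ q, p = q + 1 := ⟨p - 1, by omega⟩
  apply bdd_of_link_of_del x p (fun F hF => hF.mono (Finset.subset_insert _ _))
  · set W' := W.filter (fun u => u ≠ x ∧ (G.Adj x u → s + 2 ≤ b x + b u)) with hW'
    have hlink : (fun F => x ∉ F ∧ DeltaW G s b W (insert x F)) = DeltaW G s b W' := by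
      funext F
      apply propext
      constructor
      · rintro ⟨h1, h2, h3⟩
        refine ⟨fun u hu => ?_, fun u hu v hv => h3 u (by simp [hu]) v (by simp [hv])⟩
        rw [hW', Finset.mem_filter]
        exact ⟨h2 (by simp [hu]), fun h => h1 (h ▸ hu), fun h => h3 x (by simp) u (by simp [hu]) h⟩
      · rintro ⟨h1, h2⟩
        have h1' : ∀ u ∈ F, u ∈ W ∧ u ≠ x ∧ (G.Adj x u → s + 2 ≤ b x + b u) := by
          intro u hu
          have := h1 hu
          rwa [hW', Finset.mem_filter] at this
        refine ⟨fun h => (h1' x h).2.1 rfl, ?_, ?_⟩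
        · intro u hu
          rcases Finset.mem_insert.1 hu with rfl | hu
          · exact hx
          · exact (h1' u hu).1
        · intro u hu v hv huv
          rcases Finset.mem_insert.1 hu with hux | huF
          · rcases Finset.mem_insert.1 hv with hvx | hvF
            · exact absurd huv (by rw [hux, hvx]; exact G.irrefl)
            · rw [hux] at huv ⊢; exact (h1' v hvF).2.2 huv
          · rcases Finset.mem_insert.1 hv with hvx | hvF
            · rw [hvx] at huv ⊢; rw [add_comm (b u)]; exact (h1' u huF).2.2 huv.symm
            · exact h2 u huF v hvF huv
    rw [hlink]
    by_cases hN : ∃ u ∈ W', G.Adj x u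
    · obtain ⟨u, hu, hxu⟩ := hN
      have hu' := hu
      rw [hW', Finset.mem_filter] at hu'
      refine bdd_deltaW_of_cone G s b W' u hu (fun z hz _ => ?_) p
      have h1 := hu'.2.2 hxu
      have h2 := hmin z (Finset.mem_filter.1 hz).1
      omega
    · push Not at hN
      have hxW' : x ∉ W' := by simp [hW']
      have hwW' : w ∉ W' := by
        intro h
        have := (Finset.mem_filter.1 h).2.2 hxw
        omega
      refine IH W'.card ?_ W' p rfl ?_ ?_
      · rw [← hm]
        refine Finset.card_lt_card ⟨Finset.filter_subset _ _, fun h => hxW' (h hx)⟩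
      · intro k u v huv hu hv
        have := hp (k + 1) _ _ (isOrderedMatching_snoc huv hxw
          (fun i => ⟨fun h => hxW' (h ▸ hu i), fun h => hwW' (h ▸ hu i), hN _ (hu i)⟩)
          (fun i => ⟨fun h => hxW' (h ▸ hv i), fun h => hwW' (h ▸ hv i), hN _ (hv i)⟩))
          (fun i => ?_) (fun i => ?_)
        · omega
        · induction i using Fin.lastCases with
          | last => simpa using hx
          | cast i => simpa using (Finset.mem_filter.1 (hu i)).1
        · induction i using Fin.lastCases with
          | last => simpa using hw
          | cast i => simpa using (Finset.mem_filter.1 (hv i)).1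
      · intro u hu v hv
        exact hW u (Finset.mem_filter.1 hu).1 v (Finset.mem_filter.1 hv).1
  · have hdel : (fun F => x ∉ F ∧ DeltaW G s b W F) = DeltaW G s b (W.erase x) := by
      funext F
      apply propext
      constructor
      · rintro ⟨h1, h2, h3⟩
        exact ⟨fun u hu => Finset.mem_erase.2 ⟨fun h => h1 (h ▸ hu), h2 hu⟩, h3⟩
      · rintro ⟨h1, h2⟩
        exact ⟨fun h => by simpa using h1 h, h1.trans (Finset.erase_subset _ _), h2⟩
    rw [hdel]
    refine IH _ ?_ (W.erase x) (p + 1) rfl ?_ ?_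
    · rw [← hm]; exact Finset.card_erase_lt_of_mem hx
    · intro k u v huv hu hv
      exact hp k u v huv (fun i => Finset.mem_of_mem_erase (hu i))
        (fun i => Finset.mem_of_mem_erase (hv i))
    · intro u hu v hv
      exact hW u (Finset.mem_of_mem_erase hu) v (Finset.mem_of_mem_erase hv)

end Bdd

/-! ### Koszul homology and regular sequences -/

section Depth

open scoped Pointwise

variable {n : ℕ} {R : Type*} [CommRing R]

lemma exists_lift_mk {M : Type*} [AddCommGroup M] [Module R M] (N : Submodule R M) (p : ℕ)
    (z : Finset (Fin n) → M ⧸ N) (hz : ∀ F, F.card ≤ p → z F = 0) :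
    ∃ w : Finset (Fin n) → M, (∀ F, F.card ≤ p → w F = 0) ∧ (fun F => N.mkQ (w F)) = z := by
  choose w hw using fun F => N.mkQ_surjective (z F)
  refine ⟨fun F => if F.card ≤ p then 0 else w F, fun F hF => if_pos hF, ?_⟩
  funext F
  by_cases hF : F.card ≤ p
  · simp [hF, hz]
  · simp only [hF, if_false]; exact hw F

lemma mem_smul_top_iff {M : Type*} [AddCommGroup M] [Module R M] (r : R) (m : M) :
    m ∈ (r • ⊤ : Submodule R M) ↔ ∃ m', r • m' = m := by
  rw [Submodule.mem_smul_pointwise_iff_exists]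
  simp

/-- If `r` is `M`-regular and a multiple `r • z` of a cycle bounds, then so does `z`, provided the
Koszul homology of `M / rM` vanishes one degree higher. -/
lemma exists_of_smul {M : Type*} [AddCommGroup M] [Module R M] (y : Fin n → R) (p : ℕ) (r : R)
    (hr : IsSMulRegular M r) (h : KVan (p + 1) (QuotSMulTop r M) y)
    (z : Finset (Fin n) → M) (hz : ∀ F, F.card ≤ p → z F = 0)
    (hrz : ∃ w, kd M y w = r • z) : ∃ t, kd M y t = z := by
  obtain ⟨w, hw⟩ := hrz
  obtain ⟨w, hwc, hw, -⟩ := exists_truncated y p (fun _ => True) (r • z) w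
    (fun F hF => by simp [hz F hF]) hw (fun _ _ => trivial)
  obtain ⟨t, ht⟩ := h (fun F => (r • ⊤ : Submodule R M).mkQ (w F)) (fun F hF => by simp [hwc F hF])
    (by
      rw [kd_map, hw]
      funext F
      rw [Submodule.mkQ_apply]
      exact (Submodule.Quotient.mk_eq_zero _).2 ((mem_smul_top_iff r _).2 ⟨z F, rfl⟩))
  choose t' ht' using fun F => (r • ⊤ : Submodule R M).mkQ_surjective (t F)
  have h1 : ∀ F, ∃ m, r • m = w F - kd M y t' F := by
    intro F
    rw [← mem_smul_top_iff, ← Submodule.Quotient.mk_eq_zero, Submodule.Quotient.mk_sub, sub_eq_zero]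
    have h2 := congrFun (kd_map (r • ⊤ : Submodule R M).mkQ y t') F
    simp only [ht'] at h2
    have h3 := congrFun ht F
    exact h3.symm.trans h2
  choose q hq using h1
  refine ⟨q, ?_⟩
  have h4 : r • kd M y q = r • z := by
    rw [← map_smul, show r • q = w - kd M y t' from funext hq, map_sub, kd_kd, sub_zero, hw]
  funext F
  exact hr (congrFun h4 F)

/-- Elements of the ideal generated by `y` annihilate Koszul homology. -/
lemma exists_of_mem_span {M : Type*} [AddCommGroup M] [Module R M] (y : Fin n → R) (r : R)
    (hr : r ∈ Ideal.span (Set.range y)) (z : Finset (Fin n) → M) (hz : kd M y z = 0) :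
    ∃ w, kd M y w = r • z := by
  obtain ⟨g, rfl⟩ := (Ideal.mem_span_range_iff_exists_fun).1 hr
  refine ⟨∑ i, g i • wedge R M i z, ?_⟩
  rw [map_sum, Finset.sum_smul]
  refine Finset.sum_congr rfl fun i _ => ?_
  have := kd_wedge (M := M) y i z
  rw [hz, map_zero, add_zero] at this
  rw [map_smul, this, smul_smul]

/-- A weakly regular sequence of length `d` in the radical of `(y)` forces the Koszul homology of
`y` to vanish in degrees greater than `n - d`. -/
lemma kvan_of_isWeaklyRegular (y : Fin n → R) (rs : List R) :
    ∀ (M : Type*) [AddCommGroup M] [Module R M] (p : ℕ),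
    (∀ r ∈ rs, r ∈ (Ideal.span (Set.range y)).radical) →
    RingTheory.Sequence.IsWeaklyRegular M rs → n ≤ p + rs.length → KVan p M y := by
  induction rs with
  | nil =>
    intro M _ _ p _ _ hp c hc _
    refine ⟨0, ?_⟩
    funext F
    rw [hc F (((Finset.card_le_univ F).trans_eq (Fintype.card_fin n)).trans hp)]
    simp
  | cons r rs IH =>
    intro M _ _ p hrs hreg hp
    rw [RingTheory.Sequence.isWeaklyRegular_cons_iff] at hreg
    -- The connecting map sends a class of `M / rM` to a class of `M` one degree lower.
    have hq : KVan (p + 1) (QuotSMulTop r M) y :=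
      IH _ (p + 1) (fun r' hr' => hrs r' (by simp [hr'])) hreg.2 (by simp at hp; omega)
    intro c hc hd
    obtain ⟨N, hN⟩ := hrs r (by simp)
    -- Some power of `r` annihilates the class of `c`, and `r` acts injectively on homology.
    have key : ∀ k, (∃ w, kd M y w = r ^ k • c) → ∃ t, kd M y t = c := by
      intro k
      induction k with
      | zero => rintro ⟨w, hw⟩; exact ⟨w, by simpa using hw⟩
      | succ k ih =>
        rintro ⟨w, hw⟩
        refine ih (exists_of_smul y p r hreg.1 hq (r ^ k • c) (fun F hF => by simp [hc F hF])
          ⟨w, ?_⟩)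
        rw [hw, pow_succ', mul_smul]
    exact key N (exists_of_mem_span y _ hN c hd)

/-- A converse: vanishing of the Koszul homology in degrees greater than `p` yields weakly regular
sequences of length `n - p` in `(y)`. -/
lemma exists_isWeaklyRegular_of_kvan [IsNoetherianRing R] (y : Fin n → R) (d : ℕ) :
    ∀ (M : Type*) [AddCommGroup M] [Module R M] [Module.Finite R M] (p : ℕ), p + d ≤ n →
    KVan p M y → ∃ rs : List R, rs.length = d ∧ (∀ r ∈ rs, r ∈ Ideal.span (Set.range y)) ∧
      RingTheory.Sequence.IsWeaklyRegular M rs := by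
  induction d with
  | zero => intro M _ _ _ p _ _; exact ⟨[], rfl, by simp, by simp⟩
  | succ d IH =>
    intro M _ _ _ p hp h
    -- The top Koszul homology is the submodule annihilated by `(y)`.
    have hsoc : ∀ m : M, (∀ i, y i • m = 0) → m = 0 := by
      intro m hm
      obtain ⟨t, ht⟩ := h (fun F => if F = Finset.univ then m else 0) (fun F hF => by
          refine if_neg ?_
          rintro rfl
          simp at hF
          omega) (by
          funext F
          rw [kd_apply]
          refine Finset.sum_eq_zero fun i _ => ?_
          split_ifs
          · simp
          · rw [smul_comm, hm, smul_zero]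
          · simp)
      have := congrFun ht Finset.univ
      simpa [kd_apply] using this.symm
    -- Otherwise prime avoidance puts `(y)` inside an associated prime of `M`.
    have hnot : ¬ ((Ideal.span (Set.range y) : Ideal R) : Set R) ⊆
        ⋃ P ∈ associatedPrimes R M, (P : Set R) := by
      intro hsub
      have hfin := associatedPrimes.finite R M
      obtain ⟨P, hP, hle⟩ := (Ideal.subset_union_prime_finite hfin (f := id) 0 0
        fun P hP _ _ => IsAssociatedPrime.isPrime hP).1 hsub
      obtain ⟨hPp, m, hm⟩ := isAssociatedPrime_iff.1 hP
      have hm0 : m = 0 := by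
        refine hsoc m fun i => ?_
        have h1 : y i ∈ P := hle (Ideal.subset_span ⟨i, rfl⟩)
        rw [hm] at h1
        simpa using h1
      apply hPp.ne_top
      rw [hm, hm0]
      simp
    obtain ⟨r, hr, hrP⟩ := Set.not_subset.1 hnot
    have hreg : IsSMulRegular M r := by
      rw [biUnion_associatedPrimes_eq_compl_regular] at hrP
      simpa using hrP
    -- The connecting map sends a class of `M / rM` to a class of `M` one degree lower.
    have hq : KVan (p + 1) (QuotSMulTop r M) y := by
      intro z hz hd
      obtain ⟨w, hwc, hw⟩ := exists_lift_mk (r • ⊤ : Submodule R M) (p + 1) z hz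
      have h1 : ∀ F, ∃ m, r • m = kd M y w F := by
        intro F
        rw [← mem_smul_top_iff, ← Submodule.Quotient.mk_eq_zero]
        have h2 := congrFun (kd_map (r • ⊤ : Submodule R M).mkQ y w) F
        rw [hw] at h2
        exact h2.symm.trans (congrFun hd F)
      choose q hq using h1
      replace hq : r • q = kd M y w := funext hq
      have hqc : ∀ F, F.card ≤ p → q F = 0 := by
        intro F hF
        apply hreg
        change r • q F = r • 0
        rw [smul_zero, ← Pi.smul_apply, hq, kd_apply]
        refine Finset.sum_eq_zero fun i _ => ?_
        have := Finset.card_insert_le i F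
        rw [hwc _ (show (insert i F).card ≤ p + 1 by omega)]
        simp
      have hqd : kd M y q = 0 := by
        have h2 : r • kd M y q = 0 := by rw [← map_smul, hq, kd_kd]
        funext F
        apply hreg
        simpa using congrFun h2 F
      obtain ⟨t, ht⟩ := h q hqc hqd
      obtain ⟨t, htc, ht, -⟩ := exists_truncated y p (fun _ => True) q t hqc ht
        (fun _ _ => trivial)
      obtain ⟨v, hv⟩ := h (w - r • t) (fun F hF => by
          simp [hwc F (hF.trans (Nat.le_succ p)), htc F (hF.trans (Nat.le_succ p))])
        (by rw [map_sub, map_smul, ht, hq, sub_self])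
      refine ⟨fun F => (r • ⊤ : Submodule R M).mkQ (v F), ?_⟩
      rw [kd_map, hv, ← hw]
      funext F
      rw [Pi.sub_apply, map_sub, sub_eq_self, Submodule.mkQ_apply]
      exact (Submodule.Quotient.mk_eq_zero _).2 ((mem_smul_top_iff r _).2 ⟨t F, rfl⟩)
    obtain ⟨rs, hlen, hmem, hrs⟩ := IH (QuotSMulTop r M) (p + 1) (by omega) hq
    refine ⟨r :: rs, by simp [hlen], ?_, ?_⟩
    · intro r' hr'
      rcases List.mem_cons.1 hr' with rfl | h'
      · exact hr
      · exact hmem _ h'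
    · rw [RingTheory.Sequence.isWeaklyRegular_cons_iff]
      exact ⟨hreg, hrs⟩

end Depth

/-! ### Symbolic powers and multigraded pieces of the Koszul complex -/

section Graded

variable {n : ℕ} {K : Type*} [Field K]

lemma mem_span_pair_pow_iff {u v : Fin n} (huv : u ≠ v) (s : ℕ) (f : MvPolynomial (Fin n) K) :
    f ∈ (Ideal.span {X u, X v} : Ideal (MvPolynomial (Fin n) K)) ^ s ↔
      ∀ a ∈ f.support, s ≤ a u + a v := by
  set Q : Ideal (MvPolynomial (Fin n) K) := Ideal.span {X u, X v} with hQ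
  have key : ∀ s (f : MvPolynomial (Fin n) K),
      f ∈ Ideal.span ((fun a => monomial a (1 : K)) '' {a | s ≤ a u + a v}) ↔
      ∀ a ∈ f.support, s ≤ a u + a v := by
    intro s f
    rw [mem_ideal_span_monomial_image]
    refine forall₂_congr fun a _ => ⟨?_, fun h => ⟨a, h, le_rfl⟩⟩
    rintro ⟨b, hb, hle⟩
    exact le_trans hb (add_le_add (hle u) (hle v))
  constructor
  · rw [← key]
    revert f
    change Q ^ s ≤ _
    induction s with
    | zero =>
      intro f _
      rw [key]
      simp
    | succ s ih =>
      rw [pow_succ]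
      refine (Ideal.mul_mono ih le_rfl).trans ?_
      rw [hQ, Ideal.span_mul_span']
      rw [Ideal.span_le]
      rintro _ ⟨_, ⟨a, ha, rfl⟩, g, hg, rfl⟩
      change s ≤ a u + a v at ha
      rcases hg with rfl | hg
      · refine Ideal.subset_span ⟨a + Finsupp.single u 1, ?_, ?_⟩
        · simp [huv]; omega
        · simp [X, monomial_mul]
      · rw [Set.mem_singleton_iff] at hg
        subst hg
        refine Ideal.subset_span ⟨a + Finsupp.single v 1, ?_, ?_⟩
        · simp [huv.symm]; omega
        · simp [X, monomial_mul]
  · intro h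
    rw [f.as_sum]
    refine Ideal.sum_mem _ fun a ha => ?_
    have h1 : (X u ^ a u * X v ^ a v : MvPolynomial (Fin n) K) ∈ Q ^ s := by
      refine Ideal.pow_le_pow_right (h a ha) ?_
      rw [pow_add]
      exact Ideal.mul_mem_mul (Ideal.pow_mem_pow (Ideal.subset_span (by simp)) _)
        (Ideal.pow_mem_pow (Ideal.subset_span (by simp)) _)
    have h2 : Finsupp.single u (a u) + Finsupp.single v (a v) ≤ a := by
      intro i
      by_cases hi : i = u
      · subst hi; simp [huv]
      · by_cases hi' : i = v
        · subst hi'; simp [huv]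
        · simp [Ne.symm hi, Ne.symm hi']
    have h3 : monomial a (coeff a f) = (X u ^ a u * X v ^ a v : MvPolynomial (Fin n) K) *
        monomial (a - (Finsupp.single u (a u) + Finsupp.single v (a v))) (coeff a f) := by
      rw [X_pow_eq_monomial, X_pow_eq_monomial, monomial_mul, monomial_mul,
        add_tsub_cancel_of_le h2]
      simp
    rw [h3]
    exact Ideal.mul_mem_right _ _ h1

lemma mem_symbPow_iff (G : SimpleGraph (Fin n)) (s : ℕ) (f : MvPolynomial (Fin n) K) :
    f ∈ coverIdealSymbPow K G s ↔ ∀ a ∈ f.support, ∀ u v, G.Adj u v → s ≤ a u + a v := by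
  simp only [coverIdealSymbPow, Ideal.mem_iInf]
  constructor
  · intro h a ha u v huv
    exact (mem_span_pair_pow_iff huv.ne s f).1 (h u v huv) a ha
  · intro h u v huv
    exact (mem_span_pair_pow_iff huv.ne s f).2 fun a ha => h a ha u v huv

/-- The indicator function of `F`, as an exponent vector. -/
noncomputable def ind (F : Finset (Fin n)) : Fin n →₀ ℕ :=
  Finsupp.equivFunOnFinite.symm fun i => if i ∈ F then 1 else 0

lemma ind_apply (F : Finset (Fin n)) (i : Fin n) : ind F i = if i ∈ F then 1 else 0 := rfl

lemma ind_insert {F : Finset (Fin n)} {i : Fin n} (hi : i ∉ F) :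
    ind (insert i F) = ind F + Finsupp.single i 1 := by
  ext j
  by_cases hj : j = i
  · subst hj; simp [ind_apply, hi]
  · simp [ind_apply, hj]

/-- The component of multidegree `b` of a Koszul chain over the polynomial ring, where `e_F` has
multidegree `ind F`. -/
noncomputable def hcomp (b : Fin n →₀ ℕ) (c : Finset (Fin n) → MvPolynomial (Fin n) K) :
    Finset (Fin n) → K :=
  open Classical in fun F => if ind F ≤ b then coeff (b - ind F) (c F) else 0

lemma hcomp_sub (b : Fin n →₀ ℕ) (c d : Finset (Fin n) → MvPolynomial (Fin n) K) :
    hcomp b (c - d) = hcomp b c - hcomp b d := by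
  funext F
  simp only [hcomp, Pi.sub_apply]
  split_ifs <;> simp

lemma hcomp_kd (b : Fin n →₀ ℕ) (c : Finset (Fin n) → MvPolynomial (Fin n) K) :
    hcomp b (kd (R := MvPolynomial (Fin n) K) _ X c) = kd (R := K) K 1 (hcomp b c) := by
  classical
  funext F
  by_cases hF : ind F ≤ b
  · rw [hcomp, if_pos hF, kd_apply, kd_apply, coeff_sum]
    refine Finset.sum_congr rfl fun i _ => ?_
    by_cases hi : i ∈ F
    · simp [hi]
    · rw [if_neg hi, if_neg hi, smul_eq_mul, coeff_X_mul', Pi.one_apply, one_smul]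
      have e : (i ∈ (b - ind F).support) ↔ ind (insert i F) ≤ b := by
        rw [Finsupp.mem_support_iff]
        constructor
        · intro h j
          have h1 := hF j
          rw [Finsupp.tsub_apply] at h
          rw [ind_apply] at h h1 ⊢
          by_cases hj : j = i
          · subst hj; simp [hi] at h ⊢; omega
          · simpa [hj] using h1
        · intro h
          have := h i
          simp [ind_apply] at this
          simp [ind_apply, hi]; omega
      rw [hcomp]
      by_cases h : ind (insert i F) ≤ b
      · rw [if_pos (e.2 h), if_pos h, ind_insert hi, tsub_tsub]
        rcases neg_one_pow_eq_or ℤ (F.filter (· < i)).card with h' | h' <;> simp [kSgn, h']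
      · rw [if_neg (fun h' => h (e.1 h')), if_neg h, smul_zero]
  · rw [hcomp, if_neg hF, kd_apply]
    symm
    refine Finset.sum_eq_zero fun i _ => ?_
    split_ifs with hi
    · simp
    · rw [hcomp, if_neg, smul_zero, smul_zero]
      intro h
      refine hF (le_trans ?_ h)
      rw [ind_insert hi]
      exact le_self_add

/-- Finitely many multigraded pieces assemble to a Koszul chain. -/
lemma exists_hcomp (B : Finset (Fin n →₀ ℕ)) (g : (Fin n →₀ ℕ) → Finset (Fin n) → K)
    (hB : ∀ b, b ∉ B → g b = 0) (hg : ∀ b F, g b F ≠ 0 → ind F ≤ b) :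
    ∃ c : Finset (Fin n) → MvPolynomial (Fin n) K, ∀ b, hcomp b c = g b := by
  classical
  refine ⟨fun F => ∑ b ∈ B, if ind F ≤ b then monomial (b - ind F) (g b F) else 0, fun b => ?_⟩
  funext F
  by_cases hF : ind F ≤ b
  · rw [hcomp, if_pos hF, coeff_sum, Finset.sum_eq_single b]
    · simp [hF]
    · intro b' _ hb'
      split_ifs with h
      · rw [coeff_monomial, if_neg]
        intro h'
        exact hb' ((tsub_left_inj h hF).1 h')
      · simp
    · intro h
      simp [hF, hB b h]
  · rw [hcomp, if_neg hF]
    by_contra h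
    exact hF (hg b F (Ne.symm h))

lemma exists_support_hcomp (c : Finset (Fin n) → MvPolynomial (Fin n) K) :
    ∃ B : Finset (Fin n →₀ ℕ), ∀ b, b ∉ B → hcomp b c = 0 := by
  classical
  refine ⟨Finset.univ.biUnion fun F => (c F).support.image (· + ind F), fun b hb => ?_⟩
  funext F
  by_contra h
  apply hb
  simp only [hcomp, Pi.zero_apply] at h
  split_ifs at h with hF
  · simp only [Finset.mem_biUnion, Finset.mem_univ, true_and, Finset.mem_image]
    exact ⟨F, b - ind F, by simpa using h, tsub_add_cancel_of_le hF⟩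
  · exact absurd rfl h

/-- The piece of multidegree `b` of the Koszul complex on `J(G)^{(s)}` is supported on these `F`. -/
def DeltaB (G : SimpleGraph (Fin n)) (s : ℕ) (b : Fin n →₀ ℕ) (F : Finset (Fin n)) : Prop :=
  ind F ≤ b ∧ ∀ u v, G.Adj u v → s ≤ (b - ind F) u + (b - ind F) v

/-- `DeltaB` is either empty or one of the complexes `DeltaW`: the vertices in `W` are those whose
singletons are faces, and removing `ind F` lowers `b u + b v` by `2` on the edges inside `F`. -/
lemma bdd_deltaB (G : SimpleGraph (Fin n)) (s : ℕ) (b : Fin n →₀ ℕ) (p : ℕ)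
    (hp : ∀ k (u v : Fin k → Fin n), IsOrderedMatching G u v → k ≤ p) :
    Bdd K (DeltaB G s b) p := by
  classical
  by_cases hb : ∀ u v, G.Adj u v → s ≤ b u + b v
  · set W : Finset (Fin n) :=
      Finset.univ.filter fun v => 1 ≤ b v ∧ ∀ w, G.Adj v w → s + 1 ≤ b v + b w with hW
    have e : DeltaB G s b = DeltaW G s b W := by
      funext F
      apply propext
      constructor
      · rintro ⟨h1, h2⟩
        refine ⟨fun v hv => ?_, fun u hu v hv huv => ?_⟩
        · have h3 := h1 v
          rw [ind_apply, if_pos hv] at h3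
          refine Finset.mem_filter.2 ⟨Finset.mem_univ _, h3, fun w hw => ?_⟩
          have h4 := h2 v w hw
          simp only [Finsupp.tsub_apply, ind_apply, if_pos hv] at h4
          omega
        · have h3 := h1 v
          have h4 := h1 u
          have h5 := h2 u v huv
          simp only [Finsupp.tsub_apply, ind_apply, if_pos hv, if_pos hu] at h3 h4 h5
          omega
      · rintro ⟨h1, h2⟩
        have h1' : ∀ v ∈ F, 1 ≤ b v ∧ ∀ w, G.Adj v w → s + 1 ≤ b v + b w :=
          fun v hv => (Finset.mem_filter.1 (h1 hv)).2
        refine ⟨fun v => ?_, fun u v huv => ?_⟩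
        · rw [ind_apply]
          split_ifs with hv
          · exact (h1' v hv).1
          · exact Nat.zero_le _
        · have h3 := hb u v huv
          simp only [Finsupp.tsub_apply, ind_apply]
          by_cases hu : u ∈ F <;> by_cases hv : v ∈ F
          · have := h2 u hu v hv huv
            have := (h1' u hu).1
            have := (h1' v hv).1
            simp only [hu, hv, if_true]; omega
          · have := (h1' u hu).2 v huv
            have := (h1' u hu).1
            simp only [hu, hv, if_true, if_false]; omega
          · have := (h1' v hv).2 u huv.symm
            have := (h1' v hv).1
            simp only [hu, hv, if_true, if_false]; omega
          · simp only [hu, hv, if_false]; omega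
    rw [e]
    refine bdd_deltaW G s b _ W p rfl (fun k u v h _ _ => hp k u v h) fun u hu v _ huv => ?_
    exact (Finset.mem_filter.1 hu).2.2 v huv
  · intro c _ hc _
    refine ⟨0, by simp, ?_⟩
    funext F
    by_contra h
    have hF : c F ≠ 0 := fun h' => h (by simp [h'])
    refine hb fun u v huv => ((hc F hF).2 u v huv).trans ?_
    simp only [Finsupp.tsub_apply]
    omega

/-- If all ordered matchings have size at most `p`, then the Koszul homology of `R / J(G)^{(s)}`
vanishes in degrees greater than `p + 1`. -/
lemma kvan_symbPow (G : SimpleGraph (Fin n)) (s p : ℕ)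
    (hp : ∀ k (u v : Fin k → Fin n), IsOrderedMatching G u v → k ≤ p) :
    KVan (p + 1) (MvPolynomial (Fin n) K ⧸ coverIdealSymbPow K G s)
      (X : Fin n → MvPolynomial (Fin n) K) := by
  classical
  intro z hz hd
  obtain ⟨c, hcc, hc⟩ := exists_lift_mk (coverIdealSymbPow K G s) (p + 1) z hz
  have hdc : ∀ F, kd (R := MvPolynomial (Fin n) K) _ X c F ∈ coverIdealSymbPow K G s := by
    intro F
    rw [← Submodule.Quotient.mk_eq_zero]
    have h2 := congrFun (kd_map (coverIdealSymbPow K G s).mkQ X c) F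
    rw [hc] at h2
    exact h2.symm.trans (congrFun hd F)
  -- In multidegree `b`, correct `c` by a chain with values in the ideal so that it becomes a
  -- cycle of the Koszul complex of the polynomial ring, which is a boundary.
  have key : ∀ b, ∃ t g : Finset (Fin n) → K, (∀ F, t F ≠ 0 → DeltaB G s b F) ∧
      (∀ F, g F ≠ 0 → ind F ≤ b) ∧ hcomp b c = t + kd (R := K) K 1 g ∧
      (hcomp b c = 0 → g = 0) := by
    intro b
    by_cases hcb : hcomp b c = 0
    · exact ⟨0, 0, by simp, by simp, by simp [hcb], fun _ => rfl⟩
    have hcs : ∀ F, hcomp b c F ≠ 0 → ind F ≤ b := by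
      intro F h
      by_contra h'
      exact h (if_neg h')
    obtain ⟨i, hi⟩ : ∃ i, 1 ≤ b i := by
      by_contra! h
      apply hcb
      funext F
      by_contra hF
      have hle := hcs F hF
      have : F = ∅ := by
        refine Finset.eq_empty_of_forall_notMem fun i hi => ?_
        have h1 := hle i
        have h2 := h i
        rw [ind_apply, if_pos hi] at h1
        omega
      apply hF
      simp [hcomp, hcc F (by simp [this])]
    have hcomp_card : ∀ F, F.card ≤ p + 1 → hcomp b c F = 0 := by
      intro F hF
      simp [hcomp, hcc F hF]
    obtain ⟨t, htΔ, ht⟩ := bdd_deltaB (K := K) G s b p hp (kd (R := K) K 1 (hcomp b c))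
      (fun F hF => by
        rw [kd_apply]
        refine Finset.sum_eq_zero fun j _ => ?_
        have := Finset.card_insert_le j F
        rw [hcomp_card _ (show (insert j F).card ≤ p + 1 by omega)]
        simp)
      (fun F hF => by
        rw [← hcomp_kd, hcomp] at hF
        split_ifs at hF with h
        · exact ⟨h, (mem_symbPow_iff G s _).1 (hdc F) _ (mem_support_iff.2 hF)⟩
        · exact absurd rfl hF)
      (kd_kd _ _)
    -- Multiplication by `e_i` contracts the full simplex on the support of `b`.
    refine ⟨t, wedge K K i (hcomp b c - t), htΔ, fun F hF => ?_, ?_, fun h => absurd h hcb⟩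
    · obtain ⟨hiF, h⟩ := wedge_supp (Δ := fun F => ind F ≤ b) i _ (fun F hF => by
        by_cases h0 : t F = 0
        · refine hcs F fun h1 => hF ?_
          simp [h0, h1]
        · exact (htΔ F h0).1) F hF
      intro j
      by_cases hj : j = i
      · subst hj; rw [ind_apply, if_pos hiF]; exact hi
      · have := h j
        simpa [ind_apply, hj] using this
    · have := kd_wedge (1 : Fin n → K) i (hcomp b c - t)
      rw [map_sub (kd (R := K) K 1), ht, sub_self, map_zero, add_zero, Pi.one_apply,
        one_smul] at this
      rw [this]; abel
  choose t g htΔ hgb htg hg0 using key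
  obtain ⟨B, hB⟩ := exists_support_hcomp c
  obtain ⟨γ, hγ⟩ := exists_hcomp B g (fun b hb => hg0 b (hB b hb)) hgb
  have hdiff : ∀ F, c F - kd (R := MvPolynomial (Fin n) K) _ X γ F ∈ coverIdealSymbPow K G s := by
    intro F
    rw [mem_symbPow_iff]
    intro a ha u v huv
    have h1 : hcomp (a + ind F) (c - kd (R := MvPolynomial (Fin n) K) _ X γ) F =
        t (a + ind F) F := by
      rw [hcomp_sub, hcomp_kd, hγ, htg, add_sub_cancel_right]
    have h2 : hcomp (a + ind F) (c - kd (R := MvPolynomial (Fin n) K) _ X γ) F =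
        coeff a (c F - kd (R := MvPolynomial (Fin n) K) _ X γ F) := by
      rw [hcomp, if_pos le_add_self, add_tsub_cancel_right]; rfl
    have h3 := (htΔ (a + ind F) F (by rw [← h1, h2]; exact mem_support_iff.1 ha)).2 u v huv
    rwa [add_tsub_cancel_right] at h3
  refine ⟨fun F => (coverIdealSymbPow K G s).mkQ (γ F), ?_⟩
  rw [kd_map, ← hc]
  funext F
  symm
  rw [← sub_eq_zero, ← map_sub]
  exact (Submodule.Quotient.mk_eq_zero _).2 (hdiff F)

end Graded

/-! ### A nonzero Koszul homology class from an ordered matching -/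

section Cycle

variable {n k : ℕ} {R : Type*} [CommRing R]

/-- The product of the Koszul cycles `y_{v i} e_{u i} - y_{u i} e_{v i}`, for `i` in the list. -/
def kz (y : Fin n → R) (u v : Fin k → Fin n) : List (Fin k) → Finset (Fin n) → R
  | [] => fun F => if F = ∅ then 1 else 0
  | i :: L => y (v i) • wedge R R (u i) (kz y u v L) - y (u i) • wedge R R (v i) (kz y u v L)

lemma kd_kz (y : Fin n → R) (u v : Fin k → Fin n) (L : List (Fin k)) :
    kd R y (kz y u v L) = 0 := by
  induction L with
  | nil =>
    funext F
    rw [kd_apply]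
    refine Finset.sum_eq_zero fun i _ => ?_
    simp [kz, Finset.insert_ne_empty]
  | cons i L ih =>
    have h1 := kd_wedge y (u i) (kz y u v L)
    have h2 := kd_wedge y (v i) (kz y u v L)
    rw [ih, map_zero, add_zero] at h1 h2
    rw [kz, map_sub, map_smul, map_smul, h1, h2, smul_comm, sub_self]

lemma kz_card (y : Fin n → R) (u v : Fin k → Fin n) (L : List (Fin k)) :
    ∀ F, F.card < L.length → kz y u v L F = 0 := by
  induction L with
  | nil => simp
  | cons i L ih =>
    intro F hF
    rw [List.length_cons] at hF
    simp [kz, wedge_card_lt (R := R) (u i) _ _ ih F hF, wedge_card_lt (R := R) (v i) _ _ ih F hF]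

lemma wedge_mem (I : Ideal R) (i : Fin n) (c : Finset (Fin n) → R) (hc : ∀ F, c F ∈ I)
    (F : Finset (Fin n)) : wedge R R i c F ∈ I := by
  rw [wedge_apply]
  split_ifs
  · exact zsmul_mem (hc _) _
  · exact I.zero_mem

lemma kz_mem (y : Fin n → R) (u v : Fin k → Fin n) (L : List (Fin k)) (i : Fin k) (hi : i ∈ L) :
    ∀ F, kz y u v L F ∈ Ideal.span {y (u i), y (v i)} := by
  induction L with
  | nil => simp at hi
  | cons j L ih =>
    intro F
    simp only [kz, Pi.sub_apply, Pi.smul_apply, smul_eq_mul]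
    rcases List.mem_cons.1 hi with rfl | hi
    · exact sub_mem (Ideal.mul_mem_right _ _ (Ideal.subset_span (by simp)))
        (Ideal.mul_mem_right _ _ (Ideal.subset_span (by simp)))
    · exact sub_mem (Ideal.mul_mem_left _ _ (wedge_mem _ _ _ (ih hi) F))
        (Ideal.mul_mem_left _ _ (wedge_mem _ _ _ (ih hi) F))

/-- The face `{u i}` meets each factor of the product in `u i` only, so the coefficient there is
`± ∏ y_{v i}`. -/
lemma kz_top (y : Fin n → R) (u v : Fin k → Fin n) (hu : Function.Injective u)
    (huv : ∀ i j, u i ≠ v j) (L : List (Fin k)) (hL : L.Nodup) :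
    ∃ ε : ℤ, ε * ε = 1 ∧
      kz y u v L (L.map u).toFinset = ε • (L.map fun i => y (v i)).prod := by
  induction L with
  | nil => exact ⟨1, by simp, by simp [kz]⟩
  | cons i L ih =>
    rw [List.nodup_cons] at hL
    obtain ⟨ε, hε, h⟩ := ih hL.2
    have hi : u i ∉ (L.map u).toFinset := by
      simp only [List.mem_toFinset, List.mem_map, not_exists, not_and]
      exact fun j hj h => hL.1 (hu h ▸ hj)
    have hv : v i ∉ insert (u i) (L.map u).toFinset := by
      simp only [Finset.mem_insert, List.mem_toFinset, List.mem_map, not_or, not_exists, not_and]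
      exact ⟨(huv i i).symm, fun j _ => huv j i⟩
    refine ⟨kSgn (u i) (L.map u).toFinset * ε, ?_, ?_⟩
    · rw [mul_mul_mul_comm, kSgn_mul_self, hε, one_mul]
    · simp only [kz, Pi.sub_apply, Pi.smul_apply, List.map_cons, List.toFinset_cons, wedge_apply,
        Finset.mem_insert_self, if_true, if_neg hv, Finset.erase_insert hi, h, mul_zero, sub_zero,
        List.prod_cons, smul_smul, smul_eq_mul, mul_smul_comm]

end Cycle

section Upper

variable {n k : ℕ} {K : Type*} [Field K]

/-- For an ordered matching `{u i, v i}` in `G` of size `k ≤ (s + 1) / 2`, these values of `a` give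
`J(G)^{(s)} : x^a = ⋂ i, (x_{u i}, x_{v i})`: one has `a p + a q ≥ s` on every edge `{p, q}` outside
the matching, and `a (u i) + a (v i) = s - 1`. -/
lemma exists_exponent (u v : Fin k → Fin n) (hu : Function.Injective u)
    (hv : Function.Injective v) (huv : ∀ i j, u i ≠ v j) (s : ℕ) :
    ∃ a : Fin n →₀ ℕ, (∀ i, a (u i) = k - 1 - i) ∧ (∀ i, a (v i) = s - k + i) ∧
      ∀ w, (∀ i, w ≠ u i) → (∀ i, w ≠ v i) → a w = s := by
  refine ⟨Finsupp.equivFunOnFinite.symm (Function.extend u (fun i => k - 1 - i)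
    (Function.extend v (fun i => s - k + i) fun _ => s)), fun i => ?_, fun i => ?_, ?_⟩
  · rw [Finsupp.equivFunOnFinite_symm_apply_apply, hu.extend_apply]
  · rw [Finsupp.equivFunOnFinite_symm_apply_apply, Function.extend_apply', hv.extend_apply]
    rintro ⟨j, hj⟩
    exact huv j i hj
  · intro w h1 h2
    rw [Finsupp.equivFunOnFinite_symm_apply_apply, Function.extend_apply', Function.extend_apply']
    · rintro ⟨j, hj⟩; exact h2 j hj.symm
    · rintro ⟨j, hj⟩; exact h1 j hj.symm

lemma monomial_mem_pow {p q : Fin n} (hpq : p ≠ q) (a : Fin n →₀ ℕ) (t : ℕ) (h : t ≤ a p + a q) :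
    (monomial a 1 : MvPolynomial (Fin n) K) ∈ (Ideal.span {X p, X q}) ^ t := by
  classical
  rw [mem_span_pair_pow_iff hpq]
  intro b hb
  rw [support_monomial] at hb
  split_ifs at hb
  · simp at hb
  · rw [Finset.mem_singleton] at hb
    rwa [hb]

/-- For an ordered matching `{u i, v i}` of size `k ≤ (s + 1) / 2`, the Koszul homology of
`R / J(G)^{(s)}` with respect to the variables `x_{u i}`, `x_{v i}` and the powers `x_w^{s+1}` of
the other variables does not vanish in degree `k + 1`. -/
lemma not_kvan_symbPow (G : SimpleGraph (Fin n)) (s : ℕ) (u v : Fin k → Fin n)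
    (h : IsOrderedMatching G u v) (hk : 1 ≤ k) (hs : 2 * k - 1 ≤ s) :
    ∃ y : Fin n → MvPolynomial (Fin n) K,
      (∀ i, X i ∈ (Ideal.span (Set.range y)).radical) ∧
      ¬ KVan k (MvPolynomial (Fin n) K ⧸ coverIdealSymbPow K G s) y := by
  classical
  obtain ⟨hadj, hinj, hind, hord⟩ := h
  obtain ⟨hu, hv, huv⟩ := (orderedMatching_injective_iff u v).1 hinj
  obtain ⟨a, hau, hav, haw⟩ := exists_exponent u v hu hv huv s
  set y : Fin n → MvPolynomial (Fin n) K := fun w =>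
    if (∃ i, w = u i) ∨ (∃ i, w = v i) then X w else X w ^ (s + 1) with hy
  have hyu : ∀ i, y (u i) = X (u i) := fun i => if_pos (Or.inl ⟨i, rfl⟩)
  have hyv : ∀ i, y (v i) = X (v i) := fun i => if_pos (Or.inr ⟨i, rfl⟩)
  have hyw : ∀ w, (∀ i, w ≠ u i) → (∀ i, w ≠ v i) → y w = X w ^ (s + 1) := by
    intro w h1 h2
    refine if_neg ?_
    rintro (⟨i, hi⟩ | ⟨i, hi⟩)
    · exact h1 i hi
    · exact h2 i hi
  have hyN : ∀ i, ∃ N, y i = X i ^ N := by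
    intro i
    simp only [hy]
    split_ifs
    · exact ⟨1, (pow_one _).symm⟩
    · exact ⟨s + 1, rfl⟩
  refine ⟨y, fun i => ?_, fun hvan => ?_⟩
  · obtain ⟨N, hN⟩ := hyN i
    exact ⟨N, hN ▸ Ideal.subset_span ⟨i, rfl⟩⟩
  set f : MvPolynomial (Fin n) K := monomial a 1 with hf
  have hfZ : ∀ F, f * kz y u v (List.finRange k) F ∈ coverIdealSymbPow K G s := by
    intro F
    have hmatch : ∀ i, f * kz y u v (List.finRange k) F ∈
        (Ideal.span {X (u i), X (v i)} : Ideal (MvPolynomial (Fin n) K)) ^ s := by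
      intro i
      have h1 := kz_mem y u v (List.finRange k) i (List.mem_finRange i) F
      rw [hyu, hyv] at h1
      have h2 : f ∈ (Ideal.span {X (u i), X (v i)} : Ideal (MvPolynomial (Fin n) K)) ^ (s - 1) := by
        refine monomial_mem_pow (huv i i) a _ ?_
        rw [hau, hav]
        omega
      have h3 := Ideal.mul_mem_mul h2 h1
      rwa [← pow_succ, show s - 1 + 1 = s by omega] at h3
    simp only [coverIdealSymbPow, Ideal.mem_iInf]
    intro p q hpq
    have hmono : s ≤ a p + a q → f * kz y u v (List.finRange k) F ∈
        (Ideal.span {X p, X q} : Ideal (MvPolynomial (Fin n) K)) ^ s :=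
      fun h => Ideal.mul_mem_right _ _ (monomial_mem_pow hpq.ne a s h)
    by_cases hpu : ∃ i, p = u i
    · obtain ⟨i, rfl⟩ := hpu
      by_cases hqu : ∃ j, q = u j
      · obtain ⟨j, rfl⟩ := hqu
        exact absurd hpq (hind i j)
      · by_cases hqv : ∃ j, q = v j
        · obtain ⟨j, rfl⟩ := hqv
          have hij := hord i j hpq
          by_cases hij' : i = j
          · subst hij'; exact hmatch i
          · apply hmono
            rw [hau, hav]
            have : (i : ℕ) ≠ j := fun h => hij' (Fin.ext h)
            have : (i : ℕ) ≤ j := hij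
            omega
        · push Not at hqu hqv
          exact hmono (by rw [haw q hqu hqv]; omega)
    · by_cases hpv : ∃ i, p = v i
      · obtain ⟨i, rfl⟩ := hpv
        by_cases hqu : ∃ j, q = u j
        · obtain ⟨j, rfl⟩ := hqu
          have hij := hord j i hpq.symm
          by_cases hij' : j = i
          · subst hij'
            rw [Set.pair_comm]
            exact hmatch j
          · apply hmono
            rw [hau, hav]
            have : (j : ℕ) ≠ i := fun h => hij' (Fin.ext h)
            have : (j : ℕ) ≤ i := hij
            omega
        · by_cases hqv : ∃ j, q = v j
          · obtain ⟨j, rfl⟩ := hqv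
            apply hmono
            rw [hav, hav]
            have : (i : ℕ) ≠ j := fun h => hpq.ne (congrArg v (Fin.ext h))
            omega
          · push Not at hqu hqv
            exact hmono (by rw [haw q hqu hqv]; omega)
      · push Not at hpu hpv
        exact hmono (by rw [haw p hpu hpv]; omega)
  -- A chain `c` whose boundary is, up to sign, `f` times the product of the matching cycles.
  obtain ⟨c, hcc, hcd⟩ : ∃ c : Finset (Fin n) → MvPolynomial (Fin n) K,
      (∀ F, F.card ≤ k → c F = 0) ∧
      kd (MvPolynomial (Fin n) K) y c = - (f • kz y u v (List.finRange k)) := by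
    obtain ⟨i, L, hL⟩ : ∃ i L, List.finRange k = i :: L := by
      refine List.exists_cons_of_ne_nil fun h => ?_
      have := congrArg List.length h
      simp at this
      omega
    have hlen : L.length + 1 = k := by
      have := congrArg List.length hL
      simpa using this.symm
    refine ⟨f • wedge (MvPolynomial (Fin n) K) (MvPolynomial (Fin n) K) (u i)
      (wedge (MvPolynomial (Fin n) K) (MvPolynomial (Fin n) K) (v i) (kz y u v L)),
      fun F hF => ?_, ?_⟩
    · rw [Pi.smul_apply, wedge_card_lt (R := MvPolynomial (Fin n) K) (u i) _ _
        (wedge_card_lt (R := MvPolynomial (Fin n) K) (v i) _ _ (kz_card y u v L)) F (by omega), smul_zero]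
    · have h2 := kd_wedge y (v i) (kz y u v L)
      rw [kd_kz, map_zero, add_zero] at h2
      have h1 := kd_wedge y (u i)
        (wedge (MvPolynomial (Fin n) K) (MvPolynomial (Fin n) K) (v i) (kz y u v L))
      rw [h2, map_smul] at h1
      rw [map_smul, eq_sub_of_add_eq h1, hL, kz, ← smul_neg, neg_sub]
  obtain ⟨t, ht⟩ := hvan (fun F => (coverIdealSymbPow K G s).mkQ (c F))
    (fun F hF => by simp [hcc F hF]) (by
      rw [kd_map, hcd]
      funext F
      refine (Submodule.Quotient.mk_eq_zero _).2 ?_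
      exact neg_mem (hfZ F))
  choose t' ht' using fun F => (coverIdealSymbPow K G s).mkQ_surjective (t F)
  have hI : ∀ F, (c - kd (MvPolynomial (Fin n) K) y t') F ∈ coverIdealSymbPow K G s := by
    intro F
    rw [← Submodule.Quotient.mk_eq_zero, Pi.sub_apply, Submodule.Quotient.mk_sub, sub_eq_zero]
    have h2 := congrFun (kd_map (coverIdealSymbPow K G s).mkQ y t') F
    simp only [ht'] at h2
    have h3 := congrFun ht F
    exact h3.symm.trans h2
  set q := c - kd (MvPolynomial (Fin n) K) y t' with hq
  have hqd : kd (MvPolynomial (Fin n) K) y q = - (f • kz y u v (List.finRange k)) := by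
    rw [hq, map_sub, kd_kd, sub_zero, hcd]
  -- Compare the coefficients of `x^a ∏ x_{v j}` at the face `{u j}`.
  set e : Fin n →₀ ℕ := a + ∑ j, Finsupp.single (v j) 1 with he
  have hsum_v : ∀ i, (∑ j, Finsupp.single (v j) 1 : Fin n →₀ ℕ) (v i) = 1 := by
    intro i
    rw [Finsupp.finsetSum_apply, Finset.sum_eq_single i]
    · simp
    · intro j _ hj
      exact Finsupp.single_eq_of_ne (fun h => hj (hv h.symm))
    · simp
  have hsum_w : ∀ w, (∀ i, w ≠ v i) → (∑ j, Finsupp.single (v j) 1 : Fin n →₀ ℕ) w = 0 := by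
    intro w hw
    rw [Finsupp.finsetSum_apply]
    exact Finset.sum_eq_zero fun j _ => Finsupp.single_eq_of_ne (hw j)
  obtain ⟨ε, hε, hZ⟩ := kz_top y u v hu huv (List.finRange k) (List.nodup_finRange k)
  set U := ((List.finRange k).map u).toFinset with hU
  have hprod : f * ((List.finRange k).map fun i => y (v i)).prod = monomial e 1 := by
    simp only [hyv]
    rw [← Fin.prod_univ_def (fun i => (X (v i) : MvPolynomial (Fin n) K)), he, hf]
    simp only [X]
    rw [← monomial_sum_one, monomial_mul, one_mul]
  have hleft : coeff e (kd (MvPolynomial (Fin n) K) y q U) = - (ε • (1 : K)) := by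
    rw [hqd, Pi.neg_apply, Pi.smul_apply, hZ, smul_comm, smul_eq_mul, hprod, coeff_neg]
    have : coeff e (ε • (monomial e 1 : MvPolynomial (Fin n) K)) =
        ε • coeff e (monomial e 1 : MvPolynomial (Fin n) K) :=
      map_zsmul (coeffAddMonoidHom e) ε _
    rw [this, coeff_monomial, if_pos rfl]
  have hright : coeff e (kd (MvPolynomial (Fin n) K) y q U) = 0 := by
    rw [kd_apply, coeff_sum]
    refine Finset.sum_eq_zero fun w _ => ?_
    split_ifs with hwU
    · simp
    have hmem : kSgn w U • q (insert w U) ∈ coverIdealSymbPow K G s := zsmul_mem (hI _) _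
    generalize kSgn w U • q (insert w U) = g at hmem
    have hwu : ∀ i, w ≠ u i := by
      rintro i rfl
      apply hwU
      simp [hU]
    rw [smul_eq_mul]
    by_cases hwv : ∃ i, w = v i
    · obtain ⟨i, rfl⟩ := hwv
      rw [hyv, coeff_X_mul']
      split_ifs with hie
      -- The monomial `x^a ∏_{j ≠ i} x_{v j}` has degree `s - 1` in `x_{u i}`, `x_{v i}`.
      · by_contra hne
        have h1 := (mem_symbPow_iff G s g).1 hmem _ (mem_support_iff.2 hne) _ _ (hadj i)
        have h2 : (Finsupp.single (v i) 1 : Fin n →₀ ℕ) (u i) = 0 :=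
          Finsupp.single_eq_of_ne (huv i i)
        rw [Finsupp.tsub_apply, Finsupp.tsub_apply, h2, he, Finsupp.add_apply, Finsupp.add_apply,
          hsum_v, hsum_w _ (huv i), hau, hav] at h1
        simp at h1
        omega
      · rfl
    · push Not at hwv
      rw [hyw w hwu hwv, X_pow_eq_monomial, coeff_monomial_mul', if_neg]
      intro hle
      have h1 := hle w
      rw [he, Finsupp.add_apply, hsum_w w hwv, haw w hwu hwv] at h1
      simp at h1
  rw [hright] at hleft
  rcases Int.eq_one_or_neg_one_of_mul_eq_one hε with rfl | rfl <;> simp at hleft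

end Upper

/-! ### The depth formula -/

lemma coverIdealSymbPow_le_maxIdeal (K : Type*) [Field K] {n : ℕ} (G : SimpleGraph (Fin n))
    {u v : Fin n} (huv : G.Adj u v) {s : ℕ} (hs : 1 ≤ s) :
    coverIdealSymbPow K G s ≤ maxIdeal K n := by
  refine (iInf_le_of_le u (iInf_le_of_le v (iInf_le _ huv))).trans ?_
  refine (Ideal.pow_le_self (by omega)).trans (Ideal.span_mono ?_)
  rintro _ (rfl | h)
  · exact ⟨u, rfl⟩
  · exact ⟨v, h.symm⟩

lemma maxIdeal_ne_top (K : Type*) [Field K] (n : ℕ) : maxIdeal K n ≠ ⊤ := by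
  intro h
  have hle : maxIdeal K n ≤ RingHom.ker (constantCoeff (R := K) (σ := Fin n)) := by
    refine Ideal.span_le.2 ?_
    rintro _ ⟨i, rfl⟩
    simp
  rw [h, top_le_iff] at hle
  exact RingHom.ker_ne_top _ hle

/-- For a graph `G` with at least one edge and all `s ≥ 2ν₀(G) - 1`,
`depth(R/J(G)^{(s)}) = n - ν₀(G) - 1`. -/
theorem depth_coverIdealSymbPow_stable (K : Type*) [Field K] (n : ℕ)
    (G : SimpleGraph (Fin n)) (hG : G.edgeSet.Nonempty) (s : ℕ)
    (hs : 2 * orderedMatchingNumber G - 1 ≤ s) :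
    depthQuot K n (coverIdealSymbPow K G s) = n - orderedMatchingNumber G - 1 := by
  obtain ⟨x, w, hxw⟩ : ∃ x w, G.Adj x w := by
    obtain ⟨e, he⟩ := hG
    induction e using Sym2.ind with
    | _ x w => exact ⟨x, w, he⟩
  have hbdd : BddAbove {s : ℕ | ∃ u v : Fin s → Fin n, IsOrderedMatching G u v} := by
    refine ⟨n, ?_⟩
    rintro k ⟨u, v, -, h, -⟩
    simpa using Fintype.card_le_of_injective u ((orderedMatching_injective_iff u v).1 h).1
  have hone : 1 ∈ {s : ℕ | ∃ u v : Fin s → Fin n, IsOrderedMatching G u v} :=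
    ⟨fun _ => x, fun _ => w, fun _ => hxw, (orderedMatching_injective_iff _ _).2
      ⟨fun i j _ => Subsingleton.elim i j, fun i j _ => Subsingleton.elim i j,
        fun _ _ => hxw.ne⟩, by simp, fun i j _ => (Subsingleton.elim i j).le⟩
  have hν1 : 1 ≤ orderedMatchingNumber G := le_csSup hbdd hone
  obtain ⟨u, v, huv⟩ : ∃ u v : Fin (orderedMatchingNumber G) → Fin n, IsOrderedMatching G u v :=
    Nat.sSup_mem ⟨1, hone⟩ hbdd
  have hνmax : ∀ k (u v : Fin k → Fin n), IsOrderedMatching G u v → k ≤ orderedMatchingNumber G :=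
    fun k u v h => le_csSup hbdd ⟨u, v, h⟩
  generalize orderedMatchingNumber G = ν at *
  have hIm := coverIdealSymbPow_le_maxIdeal K G hxw (s := s) (by omega)
  refine IsGreatest.csSup_eq ⟨?_, ?_⟩
  -- Vanishing of the Koszul homology on the variables in degrees `> ν + 1` yields a regular sequence
  -- of length `n - ν - 1`; if `n - ν - 1` is truncated to `0`, the empty sequence will do.
  · by_cases hn : n ≤ ν + 1
    · refine ⟨[], by simp; omega, by simp, ?_⟩
      have : Nontrivial (MvPolynomial (Fin n) K ⧸ coverIdealSymbPow K G s) :=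
        Ideal.Quotient.nontrivial_iff.2 fun h => maxIdeal_ne_top K n (top_le_iff.1 (h ▸ hIm))
      exact RingTheory.Sequence.IsRegular.nil _ _
    · obtain ⟨rs, hlen, hmem, hrs⟩ := exists_isWeaklyRegular_of_kvan
        (X : Fin n → MvPolynomial (Fin n) K) (n - ν - 1)
        (MvPolynomial (Fin n) K ⧸ coverIdealSymbPow K G s) (ν + 1) (by omega)
        (kvan_symbPow G s ν hνmax)
      refine ⟨rs, hlen, hmem, hrs, fun htop => ?_⟩
      have hle : Ideal.ofList rs ≤ maxIdeal K n := Ideal.span_le.2 hmem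
      have h1 : (Submodule.Quotient.mk 1 : MvPolynomial (Fin n) K ⧸ coverIdealSymbPow K G s) ∈
          Ideal.ofList rs • (⊤ : Submodule (MvPolynomial (Fin n) K)
            (MvPolynomial (Fin n) K ⧸ coverIdealSymbPow K G s)) := htop ▸ Submodule.mem_top
      have h2 : Ideal.ofList rs • (⊤ : Submodule (MvPolynomial (Fin n) K)
            (MvPolynomial (Fin n) K ⧸ coverIdealSymbPow K G s)) ≤
          Submodule.map (coverIdealSymbPow K G s).mkQ (maxIdeal K n) := by
        refine Submodule.smul_le.2 fun r hr m _ => ?_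
        obtain ⟨m, rfl⟩ := (coverIdealSymbPow K G s).mkQ_surjective m
        exact ⟨r • m, Ideal.mul_mem_right _ _ (hle hr), rfl⟩
      obtain ⟨g, hg, hg1⟩ := h2 h1
      have h3 : g - 1 ∈ coverIdealSymbPow K G s := (Submodule.Quotient.eq _).1 hg1
      refine maxIdeal_ne_top K n ((Ideal.eq_top_iff_one _).2 ?_)
      have := sub_mem hg (hIm h3)
      rwa [sub_sub_cancel] at this
  -- A longer regular sequence would kill the Koszul homology in degree `ν + 1`.
  · rintro d ⟨rs, rfl, hmem, hrs⟩
    by_contra! hlt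
    obtain ⟨y, hyrad, hnot⟩ := not_kvan_symbPow (K := K) G s u v huv hν1 hs
    refine hnot (kvan_of_isWeaklyRegular y rs _ ν (fun r hr => ?_) hrs.1 (by omega))
    have hle : maxIdeal K n ≤ (Ideal.span (Set.range y)).radical := by
      refine Ideal.span_le.2 ?_
      rintro _ ⟨i, rfl⟩
      exact hyrad i
    exact hle (hmem r hr)
end
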